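/- arXiv:1312.1075 — 7 statements merged into one kernel-verified Lean document; each statement's English description precedes it below -/
import Mathlib

section
/- Consider a game with finitely many players 1,…,N in which each player i has a nonempty, compact and convex action set X_i ⊆ ℝ^{n_i} and a utility function U_i : X_1 × ⋯ × X_N → ℝ that is continuous on X_1 × ⋯ × X_N and quasi-convex in x_i for each fixed x_{-i} ∈ ×_{j≠i} X_j. Then the game admits a pure strategy Nash equilibrium: there exists a profile x* with x_i* ∈ X_i for all i such that for every player i and every x_i ∈ X_i, U_i(x_i*, x_{-i}*) ≤ U_i(x_i, x_{-i}*). -/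
/-!
Finding an equilibrium up to an error `ε` is enough: the action sets are compact and the utilities
continuous, so approximate equilibria with `ε → 0` accumulate at an exact one.

For fixed `ε`, take a finite net `Y` of the set of profiles. By uniform continuity, for every
profile `x` some `y ∈ Y` has components that all lose less than `ε / 2` against best responses to
`x`. Give each `y ∈ Y` a weight that depends continuously on `x` and is positive exactly when every
component of `y` does, up to `ε / 2`, as well against `x` as the components of the other members of
`Y`. Normalizing the weights gives a continuous self-map of the simplex spanned by `Y`. At a fixed
point, the action `x i` is a convex combination of almost best responses to `x`, hence is one
itself by quasi-convexity (`exists_approx_nash`).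

The fixed point comes from Brouwer's theorem on a simplex (`exists_fixed_stdSimplex`), which is
derived from Scarf's lemma (`Scarf.exists_colorful`, `Scarf.exists_dominating`). Scarf's lemma plays
the part of Sperner's lemma but needs no triangulation: its cells are subsets of a finite set that
are dominant for a family of rankings, one ranking per vertex of the simplex. As in Sperner's lemma,
cells and their facets are counted modulo 2: a facet lies in exactly two cells
(`Scarf.IsPivot.card_extensions_eq_two`), except for one boundary facet of each type, which lies in
one (`Scarf.card_extensions_outer`). Colouring a grid point `x` by a coordinate with `x i ≤ f x i`
turns a cell with all colours into an almost fixed point (`exists_almost_fixed`).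
-/

noncomputable section

set_option linter.unusedSectionVars false

/-! ### Scarf's lemma -/

namespace Scarf

open Finset

section Combinatorics

variable {I V : Type*}

/-- A finite set `S` is dominant for the family of rankings `r i` if no point is ranked strictly
above the minimum of `S` in all rankings at once. -/
def Dominant (r : I → V → ℕ) (S : Finset V) : Prop :=
  ∀ y, ∃ i, ∀ x ∈ S, r i y ≤ r i x

lemma Dominant.mono {r : I → V → ℕ} {S S' : Finset V} (h : Dominant r S) (hS : S' ⊆ S) :
    Dominant r S' := fun y => by
  obtain ⟨i, hi⟩ := h y
  exact ⟨i, fun x hx => hi x (hS hx)⟩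

/-- `Q` is a dominant set with one element fewer than there are rankings, `m l` is the
lowest-ranked element of `Q` for the ranking `r l`, and `i ≠ j` are two rankings with the same
lowest-ranked element. -/
structure IsPivot [Fintype I] (r : I → V → ℕ) (Q : Finset V) (m : I → V) (i j : I) : Prop where
  dom : Dominant r Q
  card : #Q + 1 = Fintype.card I
  mem : ∀ l, m l ∈ Q
  min : ∀ l, ∀ x ∈ Q, r l (m l) ≤ r l x
  ne : i ≠ j
  eq : m i = m j

variable [Fintype I] [DecidableEq I] [Fintype V] [DecidableEq V]
  {r : I → V → ℕ} {Q : Finset V} {m : I → V} {i j : I}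

/-- Since `Q` has fewer elements than there are rankings, two rankings share a lowest element. -/
lemma exists_isPivot (hQ : Dominant r Q) (hne : Q.Nonempty) (hcard : #Q + 1 = Fintype.card I) :
    ∃ m i j, IsPivot r Q m i j := by
  choose m hm hmin using fun l => Q.exists_min_image (r l) hne
  obtain ⟨i, -, j, -, hij, h⟩ := Finset.exists_ne_map_eq_of_card_lt_of_maps_to
    (s := univ) (t := Q) (f := m) (by rw [card_univ]; omega) (fun l _ => hm l)
  exact ⟨m, i, j, hQ, hcard, hm, hmin, hij, h⟩

namespace IsPivot

lemma swap (h : IsPivot r Q m i j) : IsPivot r Q m j i :=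
  ⟨h.dom, h.card, h.mem, h.min, h.ne.symm, h.eq.symm⟩

/-- By dominance, every element of `Q` is lowest-ranked for some ranking. -/
lemma exists_min (hr : ∀ l, Function.Injective (r l)) (h : IsPivot r Q m i j) {x : V}
    (hx : x ∈ Q) : ∃ l, l ≠ i ∧ m l = x := by
  obtain ⟨l, hl⟩ := h.dom x
  have hlx : m l = x := hr l (le_antisymm (h.min l x hx) (hl _ (h.mem l)))
  by_cases hli : l = i
  · exact ⟨j, h.ne.symm, by rw [← h.eq, ← hli, hlx]⟩
  · exact ⟨l, hli, hlx⟩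

/-- Away from `i`, distinct rankings have distinct lowest elements. -/
lemma inj (hr : ∀ l, Function.Injective (r l)) (h : IsPivot r Q m i j) {l l' : I}
    (hl : l ≠ i) (hl' : l' ≠ i) (e : m l = m l') : l = l' := by
  have hinj : Set.InjOn m (univ.erase i : Finset I) := by
    refine Finset.injOn_of_surjOn_of_card_le m (t := Q) (fun l _ => h.mem l) (fun x hx => ?_) ?_
    · obtain ⟨l, hl, rfl⟩ := h.exists_min hr hx
      exact ⟨l, by simpa using hl, rfl⟩
    · rw [card_erase_of_mem (mem_univ _), card_univ]
      have := h.card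
      omega
  exact hinj (by simpa using hl) (by simpa using hl') e

end IsPivot

/-- The points ranked strictly above the minimum of `Q` in all rankings except possibly `k`. -/
def above (r : I → V → ℕ) (m : I → V) (k : I) : Finset V :=
  univ.filter fun y => ∀ l, l ≠ k → r l (m l) < r l y

lemma mem_above {k : I} {y : V} : y ∈ above r m k ↔ ∀ l, l ≠ k → r l (m l) < r l y := by
  simp [above]

namespace IsPivot

lemma not_mem_of_above (hr : ∀ l, Function.Injective (r l)) (h : IsPivot r Q m i j) {x : V}
    (hx : x ∈ above r m i) : x ∉ Q := fun hxQ => by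
  obtain ⟨l, hl, rfl⟩ := h.exists_min hr hxQ
  exact lt_irrefl _ (mem_above.1 hx l hl)

/-- The lowest element of `Q` for the ranking `r i` can be replaced, in that role, by the point of
`above r m i` that `r i` ranks highest. -/
lemma dominant_insert_of_max (h : IsPivot r Q m i j) {x : V}
    (hx : x ∈ above r m i) (hmax : ∀ y ∈ above r m i, r i y ≤ r i x) :
    Dominant r (insert x Q) := by
  have hx' := mem_above.1 hx
  intro y
  by_cases hy : y ∈ above r m i
  · obtain ⟨l, hl⟩ := h.dom x
    have hli : l = i := by
      by_contra hne
      exact absurd (hx' l hne) (not_lt.2 (hl _ (h.mem l)))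
    subst hli
    refine ⟨l, fun z hz => ?_⟩
    rcases mem_insert.1 hz with rfl | hz
    · exact hmax y hy
    · exact (hmax y hy).trans (hl z hz)
  · rw [mem_above] at hy
    push Not at hy
    obtain ⟨l, hl, hly⟩ := hy
    refine ⟨l, fun z hz => ?_⟩
    rcases mem_insert.1 hz with rfl | hz
    · exact hly.trans (hx' l hl).le
    · exact hly.trans (h.min l z hz)

/-- If `insert x Q` is dominant, then `x` is lowest-ranked for exactly one ranking `k`; the other
rankings must still exhaust `Q`, which forces `k` to be `i` or `j`. -/
lemma of_dominant_insert (hr : ∀ l, Function.Injective (r l)) (h : IsPivot r Q m i j) {x : V}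
    (hxQ : x ∉ Q) (hdom : Dominant r (insert x Q)) :
    ∃ k, (k = i ∨ k = j) ∧ x ∈ above r m k ∧ ∀ y ∈ above r m k, r k y ≤ r k x := by
  obtain ⟨k, hk⟩ := hdom x
  have hlt : r k x < r k (m k) := by
    refine lt_of_le_of_ne (hk _ (mem_insert_of_mem (h.mem k))) fun e => hxQ ?_
    rw [hr k e]
    exact h.mem k
  have key : ∀ q ∈ Q, ∃ l, l ≠ k ∧ m l = q ∧ r l q ≤ r l x := by
    intro q hq
    obtain ⟨l, hl⟩ := hdom q
    have hlq : m l = q :=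
      hr l (le_antisymm (h.min l q hq) (hl _ (mem_insert_of_mem (h.mem l))))
    refine ⟨l, ?_, hlq, hl _ (mem_insert_self _ _)⟩
    rintro rfl
    have := hl x (mem_insert_self _ _)
    rw [← hlq] at this
    omega
  have hkij : k = i ∨ k = j := by
    by_contra hne
    push Not at hne
    obtain ⟨l, hlk, hl, -⟩ := key (m k) (h.mem k)
    by_cases hli : l = i
    · exact hlk (h.swap.inj hr (by rw [hli]; exact h.ne) hne.2 hl)
    · exact hlk (h.inj hr hli hne.1 hl)
  have hinj : ∀ l l', l ≠ k → l' ≠ k → m l = m l' → l = l' := by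
    rcases hkij with rfl | rfl
    · exact fun l l' => h.inj hr
    · exact fun l l' => h.swap.inj hr
  refine ⟨k, hkij, mem_above.2 fun l hl => ?_, fun y hy => ?_⟩
  · obtain ⟨l', hl', hm, hle⟩ := key (m l) (h.mem l)
    obtain rfl := hinj _ _ hl' hl hm
    refine lt_of_le_of_ne hle fun e => hxQ ?_
    rw [← hr _ e]
    exact h.mem _
  · obtain ⟨l, hl⟩ := hdom y
    by_cases hlk : l = k
    · rw [← hlk]
      exact hl x (mem_insert_self _ _)
    · exact absurd (mem_above.1 hy l hlk)
        (not_lt.2 (hl _ (mem_insert_of_mem (h.mem l))))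

end IsPivot

open Classical in
/-- The points whose addition to `Q` yields a dominant set. -/
def extensions (r : I → V → ℕ) (Q : Finset V) : Finset V :=
  univ.filter fun x => x ∉ Q ∧ Dominant r (insert x Q)

lemma mem_extensions {x : V} : x ∈ extensions r Q ↔ x ∉ Q ∧ Dominant r (insert x Q) := by
  simp [extensions]

/-- Each of the two rankings `i` and `j` contributes one extension. -/
lemma IsPivot.card_extensions_eq_two (hr : ∀ l, Function.Injective (r l))
    (h : IsPivot r Q m i j) (hi : (above r m i).Nonempty) (hj : (above r m j).Nonempty) :
    #(extensions r Q) = 2 := by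
  obtain ⟨a, ha, hamax⟩ := exists_max_image _ (r i) hi
  obtain ⟨b, hb, hbmax⟩ := exists_max_image _ (r j) hj
  have hab : a ≠ b := by
    rintro rfl
    obtain ⟨l, hl⟩ := h.dom a
    have hle := hl _ (h.mem l)
    by_cases hli : l = i
    · exact absurd (mem_above.1 hb l (by rw [hli]; exact h.ne)) (not_lt.2 hle)
    · exact absurd (mem_above.1 ha l hli) (not_lt.2 hle)
  rw [show extensions r Q = {a, b} from ?_, card_pair hab]
  ext x
  rw [mem_extensions, mem_insert, mem_singleton]
  constructor
  · rintro ⟨hxQ, hx⟩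
    obtain ⟨k, rfl | rfl, hk, hmax⟩ := h.of_dominant_insert hr hxQ hx
    · exact Or.inl (hr _ (le_antisymm (hamax x hk) (hmax a ha)))
    · exact Or.inr (hr _ (le_antisymm (hbmax x hk) (hmax b hb)))
  · rintro (rfl | rfl)
    · exact ⟨h.not_mem_of_above hr ha, h.dominant_insert_of_max ha hamax⟩
    · exact ⟨h.swap.not_mem_of_above hr hb, h.swap.dominant_insert_of_max hb hbmax⟩

lemma IsPivot.card_extensions_eq_one (hr : ∀ l, Function.Injective (r l))
    (h : IsPivot r Q m i j) (hi : (above r m i).Nonempty) (hj : ¬ (above r m j).Nonempty) :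
    #(extensions r Q) = 1 := by
  obtain ⟨a, ha, hamax⟩ := exists_max_image _ (r i) hi
  rw [card_eq_one]
  refine ⟨a, ?_⟩
  ext x
  rw [mem_extensions, mem_singleton]
  constructor
  · rintro ⟨hxQ, hx⟩
    obtain ⟨k, rfl | rfl, hk, hmax⟩ := h.of_dominant_insert hr hxQ hx
    · exact hr _ (le_antisymm (hamax x hk) (hmax a ha))
    · exact absurd ⟨x, hk⟩ hj
  · rintro rfl
    exact ⟨h.not_mem_of_above hr ha, h.dominant_insert_of_max ha hamax⟩

/-- Slack points: `e i` is the lowest point of the ranking `r i`, while every other `e j` is ranked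
by `r i` above all points that are not slack. -/
structure IsSlack (r : I → V → ℕ) (e : I → V) : Prop where
  inj : Function.Injective e
  low : ∀ i v, r i (e i) ≤ r i v
  high : ∀ i j v, j ≠ i → v ∉ Set.range e → r i v < r i (e j)

/-- The slack points other than `e i₀`. -/
def outer (e : I → V) (i₀ : I) : Finset V := (univ.erase i₀).image e

lemma mem_outer {e : I → V} (he : Function.Injective e) {i₀ l : I} :
    e l ∈ outer e i₀ ↔ l ≠ i₀ := by
  simp [outer, he.eq_iff]

lemma card_outer {e : I → V} (he : Function.Injective e) (i₀ : I) :
    #(outer e i₀) + 1 = Fintype.card I := by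
  rw [outer, card_image_of_injective _ he, card_erase_of_mem (mem_univ _), card_univ]
  have : 0 < Fintype.card I := Fintype.card_pos_iff.2 ⟨i₀⟩
  omega

/-- If the lowest element of `Q` in the ranking `r l` is a slack point other than `e l`, then `Q`
consists of all slack points but `e l`. -/
lemma IsPivot.eq_outer (hr : ∀ l, Function.Injective (r l)) {e : I → V} (he : IsSlack r e)
    (h : IsPivot r Q m i j) {l k : I} (hlk : k ≠ l) (hm : m l = e k) : Q = outer e l := by
  refine Finset.eq_of_subset_of_card_le (fun x hx => ?_) ?_
  · have hle := h.min l x hx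
    rw [hm] at hle
    by_cases hxe : x ∈ Set.range e
    · obtain ⟨p, rfl⟩ := hxe
      refine (mem_outer he.inj).2 ?_
      rintro rfl
      exact hlk (he.inj (hr p (le_antisymm hle (he.low p _))))
    · exact absurd (he.high l k x hlk hxe) (not_lt.2 hle)
  · have := card_outer he.inj l
    have := h.card
    omega

/-- Unless `Q` consists of all slack points but one, the slack point `e i` is available to replace
the lowest element of `Q` in the ranking `r i`. -/
lemma IsPivot.above_nonempty (hr : ∀ l, Function.Injective (r l)) {e : I → V} (he : IsSlack r e)
    (h : IsPivot r Q m i j) (hQ : ∀ l, Q ≠ outer e l) : (above r m i).Nonempty := by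
  have hi : e i ∉ Q := fun hi => by
    have : m i = e i := hr i (le_antisymm (h.min i _ hi) (he.low i _))
    exact hQ j (h.eq_outer hr he h.ne (by rw [← h.eq, this]))
  refine ⟨e i, mem_above.2 fun l hl => ?_⟩
  by_cases hml : m l ∈ Set.range e
  · obtain ⟨p, hp⟩ := hml
    by_cases hpl : p = l
    · subst hpl
      rw [← hp]
      exact lt_of_le_of_ne (he.low p _) fun h' => hl (he.inj (hr p h'))
    · exact absurd (h.eq_outer hr he hpl hp.symm) (hQ l)
  · exact he.high l i _ hl.symm hml

/-- The boundary case: all slack points but `e i₀` form a dominant set with a single extension. The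
ranking `r i₀` shares its lowest element, some `e j`, with `r j`; the points that are not slack allow
a replacement for `i₀`, while nothing can replace `e j` in the ranking `r j`. -/
lemma card_extensions_outer (hr : ∀ l, Function.Injective (r l)) {e : I → V}
    (he : IsSlack r e) (hcard : 2 ≤ Fintype.card I) (i₀ : I) {v : V} (hv : v ∉ Set.range e) :
    Dominant r (outer e i₀) ∧ #(extensions r (outer e i₀)) = 1 := by
  have hdom : Dominant r (outer e i₀) := fun y => by
    by_cases hy : y ∈ Set.range e
    · obtain ⟨p, rfl⟩ := hy
      exact ⟨p, fun x _ => he.low p x⟩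
    · refine ⟨i₀, fun x hx => ?_⟩
      obtain ⟨l, hl, rfl⟩ := mem_image.1 hx
      exact (he.high i₀ l y (ne_of_mem_erase hl) hy).le
  have hne : (outer e i₀).Nonempty := by
    rw [← card_pos]
    have := card_outer he.inj i₀
    omega
  refine ⟨hdom, ?_⟩
  obtain ⟨m, i, j, h⟩ := exists_isPivot hdom hne (card_outer he.inj i₀)
  have hm : ∀ l, l ≠ i₀ → m l = e l := fun l hl =>
    hr l (le_antisymm (h.min l _ ((mem_outer he.inj).2 hl)) (he.low l _))
  wlog hi : i = i₀ generalizing i j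
  · refine this j i h.swap ?_
    by_contra hj
    exact h.ne (he.inj (by rw [← hm i hi, ← hm j hj, h.eq]))
  subst hi
  refine h.card_extensions_eq_one hr ⟨v, mem_above.2 fun l hl => ?_⟩ ?_
  · rw [hm l hl]
    exact lt_of_le_of_ne (he.low l _) fun h' => hv ⟨l, hr l h'⟩
  · rintro ⟨y, hy⟩
    have hy' := mem_above.1 hy
    have hlt := hy' i h.ne
    rw [h.eq, hm j h.ne.symm] at hlt
    by_cases hye : y ∈ Set.range e
    · obtain ⟨p, rfl⟩ := hye
      by_cases hpj : p = j
      · exact lt_irrefl _ (hpj ▸ hlt)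
      · by_cases hpi : p = i
        · subst hpi
          exact absurd hlt (not_lt.2 (he.low p _))
        · have := hy' p hpj
          rw [hm p hpi] at this
          exact lt_irrefl _ this
    · exact absurd hlt (not_lt.2 (he.high i j y h.ne.symm hye).le)

/-- The elements of `S` whose removal leaves a set carrying exactly the colours other than `i₀`. -/
def removable (c : V → I) (i₀ : I) (S : Finset V) : Finset V :=
  S.filter fun x => (S.erase x).image c = univ.erase i₀

/-- If removing `x` leaves all colours but `i₀` once each and `S` misses a colour, then the colour
of `x` is repeated exactly once, so the only other removable element is the one sharing it. -/
lemma even_card_removable (c : V → I) (i₀ : I) {S : Finset V} (hS : #S = Fintype.card I)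
    (hc : S.image c ≠ univ) : Even #(removable c i₀ S) := by
  have hinj : ∀ x ∈ removable c i₀ S, Set.InjOn c (S.erase x : Finset V) := by
    intro x hx
    obtain ⟨hxS, hx⟩ := mem_filter.1 hx
    rw [← card_image_iff, hx, card_erase_of_mem hxS, card_erase_of_mem (mem_univ _), card_univ, hS]
  rcases (removable c i₀ S).eq_empty_or_nonempty with h | ⟨x, hx⟩
  · simp [h]
  obtain ⟨hxS, hxc⟩ := mem_filter.1 hx
  have hcx : c x ≠ i₀ := by
    intro hcx
    apply hc
    rw [← insert_erase hxS, image_insert, hxc, hcx, insert_erase (mem_univ _)]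
  have hmem : c x ∈ (S.erase x).image c := by
    rw [hxc]
    exact mem_erase.2 ⟨hcx, mem_univ _⟩
  obtain ⟨x', hx', hcc⟩ := mem_image.1 hmem
  obtain ⟨hne, hx'S⟩ := mem_erase.1 hx'
  rw [show removable c i₀ S = {x, x'} from ?_, card_pair hne.symm]
  · exact even_two
  ext z
  rw [mem_insert, mem_singleton]
  constructor
  · intro hz
    by_contra hzz
    push Not at hzz
    exact hne (hinj z hz (mem_coe.2 (mem_erase.2 ⟨hzz.2.symm, hx'S⟩))
      (mem_coe.2 (mem_erase.2 ⟨hzz.1.symm, hxS⟩)) hcc)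
  · rintro (rfl | rfl)
    · exact hx
    · refine mem_filter.2 ⟨hx'S, ?_⟩
      rw [← hxc]
      ext p
      simp only [mem_image, mem_erase]
      constructor
      · rintro ⟨w, ⟨-, hwS⟩, rfl⟩
        by_cases hwx : w = x
        · exact ⟨z, ⟨hne, hx'S⟩, by rw [hwx, hcc]⟩
        · exact ⟨w, ⟨hwx, hwS⟩, rfl⟩
      · rintro ⟨w, ⟨-, hwS⟩, rfl⟩
        by_cases hwz : w = z
        · exact ⟨x, ⟨hne.symm, hxS⟩, by rw [hwz, hcc]⟩
        · exact ⟨w, ⟨hwz, hwS⟩, rfl⟩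

open Classical in
/-- **Scarf's lemma**: for every colouring that gives the slack point `e i` the colour `i`, some
dominant set with as many elements as there are rankings carries all colours. -/
theorem exists_colorful (hr : ∀ l, Function.Injective (r l)) {e : I → V} (he : IsSlack r e)
    (hcard : 2 ≤ Fintype.card I) {v : V} (hv : v ∉ Set.range e) (c : V → I)
    (hc : ∀ i, c (e i) = i) :
    ∃ S : Finset V, Dominant r S ∧ #S = Fintype.card I ∧ S.image c = univ := by
  by_contra hcon
  push Not at hcon
  obtain ⟨i₀⟩ : Nonempty I := Fintype.card_pos_iff.1 (by omega)
  let R : Finset (Finset V) := univ.filter fun S => Dominant r S ∧ #S = Fintype.card I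
  let D : Finset (Finset V) := univ.filter fun Q =>
    Dominant r Q ∧ #Q + 1 = Fintype.card I ∧ Q.image c = univ.erase i₀
  -- Count the pairs (dominant set, removable element) in two ways.
  have hcount : ∑ S ∈ R, #(removable c i₀ S) = ∑ Q ∈ D, #(extensions r Q) := by
    rw [← card_sigma, ← card_sigma]
    refine card_nbij' (fun p => ⟨p.1.erase p.2, p.2⟩) (fun p => ⟨insert p.2 p.1, p.2⟩) ?_ ?_ ?_ ?_
    · rintro ⟨S, x⟩ h
      simp only [coe_sigma, Set.mem_sigma_iff, mem_coe, R, D, mem_filter, mem_univ, true_and,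
        removable, mem_extensions] at h ⊢
      obtain ⟨⟨hd, hS⟩, hx, hcx⟩ := h
      refine ⟨⟨hd.mono (erase_subset _ _), ?_, hcx⟩, notMem_erase _ _, ?_⟩
      · rw [card_erase_add_one hx, hS]
      · rwa [insert_erase hx]
    · rintro ⟨Q, x⟩ h
      simp only [coe_sigma, Set.mem_sigma_iff, mem_coe, R, D, mem_filter, mem_univ, true_and,
        removable, mem_extensions] at h ⊢
      obtain ⟨⟨hd, hQ, hcQ⟩, hx, hdx⟩ := h
      refine ⟨⟨hdx, ?_⟩, mem_insert_self _ _, ?_⟩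
      · rw [card_insert_of_notMem hx, hQ]
      · rwa [erase_insert hx]
    · rintro ⟨S, x⟩ h
      simp only [coe_sigma, Set.mem_sigma_iff, mem_coe, removable, mem_filter] at h
      simp [insert_erase h.2.1]
    · rintro ⟨Q, x⟩ h
      simp only [coe_sigma, Set.mem_sigma_iff, mem_coe, mem_extensions] at h
      simp [erase_insert h.2.1]
  have heven : Even (∑ S ∈ R, #(removable c i₀ S)) := by
    refine Finset.even_sum _ fun S hS => ?_
    obtain ⟨hd, hS⟩ := (mem_filter.1 hS).2
    exact even_card_removable c i₀ hS (hcon S hd hS)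
  obtain ⟨hod, ho⟩ := card_extensions_outer hr he hcard i₀ hv
  have hout : ∀ l, (outer e l).image c = univ.erase l := fun l => by
    rw [outer, image_image, show c ∘ e = id from funext hc, image_id]
  have hoD : outer e i₀ ∈ D :=
    mem_filter.2 ⟨mem_univ _, hod, card_outer he.inj i₀, hout i₀⟩
  have hrest : Even (∑ Q ∈ D.erase (outer e i₀), #(extensions r Q)) := by
    refine Finset.even_sum _ fun Q hQ => ?_
    obtain ⟨hQo, hQ⟩ := mem_erase.1 hQ
    obtain ⟨hd, hQc, hQi⟩ := (mem_filter.1 hQ).2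
    have hne : ∀ l, Q ≠ outer e l := by
      rintro l rfl
      rw [hout] at hQi
      have : l = i₀ := by
        by_contra hl
        exact notMem_erase l univ (hQi ▸ mem_erase.2 ⟨hl, mem_univ _⟩)
      exact hQo (by rw [this])
    obtain ⟨m, i, j, h⟩ := exists_isPivot hd (card_pos.1 (by omega)) hQc
    rw [h.card_extensions_eq_two hr (h.above_nonempty hr he hne)
      (h.swap.above_nonempty hr he hne)]
    exact even_two
  rw [hcount, ← add_sum_erase D _ hoD, ho] at heven
  exact absurd heven (by rw [Nat.not_even_iff_odd]; exact odd_one.add_even hrest)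

/-- **Scarf's lemma** for weights that may have ties, stated without slack points: `C`
plays the role of the indices whose slack points do not belong to the dominant set. -/
theorem exists_dominating {T : Type*} [Fintype T] [Nonempty T] (hcard : 2 ≤ Fintype.card I)
    (w : I → T → ℕ) (c : T → I) :
    ∃ (σ : Finset T) (C : Finset I), σ.Nonempty ∧ (∀ y, ∃ i ∈ C, ∀ t ∈ σ, w i y ≤ w i t) ∧
      ∀ i ∈ C, ∃ t ∈ σ, c t = i := by
  classical
  let N := Fintype.card T
  let q : T ≃ Fin N := Fintype.equivFin T
  let p : I ≃ Fin (Fintype.card I) := Fintype.equivFin I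
  -- Ties are broken by a fixed enumeration of `T`.
  let ρ : I → T → ℕ := fun i t => w i t * N + q t
  have hρ : ∀ i t t', ρ i t ≤ ρ i t' → w i t ≤ w i t' := by
    intro i t t' h
    by_contra! hlt
    have h1 : (w i t' + 1) * N ≤ w i t * N := Nat.mul_le_mul_right _ hlt
    have h2 := (q t').2
    simp only [ρ] at h
    rw [add_mul] at h1
    omega
  have hρinj : ∀ i, Function.Injective (ρ i) := by
    intro i t t' h
    have h1 : w i t = w i t' := le_antisymm (hρ i t t' h.le) (hρ i t' t h.ge)
    simp only [ρ, h1] at h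
    exact q.injective (Fin.ext (by omega))
  let B : ℕ := ∑ i, ∑ t, ρ i t
  have hB : ∀ i t, ρ i t ≤ B := fun i t =>
    (single_le_sum (f := ρ i) (fun _ _ => Nat.zero_le _) (mem_univ t)).trans
      (single_le_sum (f := fun i => ∑ t, ρ i t) (fun _ _ => Nat.zero_le _) (mem_univ i))
  let r : I → T ⊕ I → ℕ := fun i =>
    Sum.elim (fun t => ρ i t + 1) (fun j => if j = i then 0 else B + 2 + p j)
  have hr : ∀ i, Function.Injective (r i) := by
    rintro i (t | j) (t' | j') h
    · have : ρ i t + 1 = ρ i t' + 1 := h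
      rw [hρinj i (by omega : ρ i t = ρ i t')]
    · have h' : ρ i t + 1 = if j' = i then 0 else B + 2 + p j' := h
      have := hB i t
      split_ifs at h'
      all_goals omega
    · have h' : (if j = i then 0 else B + 2 + (p j : ℕ)) = ρ i t' + 1 := h
      have := hB i t'
      split_ifs at h'
      all_goals omega
    · have h' : (if j = i then 0 else B + 2 + (p j : ℕ)) = if j' = i then 0 else B + 2 + p j' := h
      split_ifs at h' with h1 h2 h2
      · rw [h1, h2]
      · omega
      · omega
      · rw [p.injective (Fin.ext (by omega) : p j = p j')]
  have he : IsSlack r (Sum.inr : I → T ⊕ I) := by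
    refine ⟨Sum.inr_injective, fun i v => ?_, ?_⟩
    · simp [r]
    · rintro i j (t | k) hji hv
      · have := hB i t
        simp only [r, Sum.elim_inl, Sum.elim_inr, if_neg hji]
        omega
      · exact absurd ⟨k, rfl⟩ hv
  obtain ⟨t₀⟩ := ‹Nonempty T›
  obtain ⟨S, hdom, hS, hSc⟩ := exists_colorful hr he hcard (v := Sum.inl t₀) (by simp)
    (Sum.elim c id) (fun _ => rfl)
  have hd : ∀ y : T, ∃ i, Sum.inr i ∉ S ∧ ∀ t, Sum.inl t ∈ S → w i y ≤ w i t := by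
    intro y
    obtain ⟨i, hi⟩ := hdom (Sum.inl y)
    refine ⟨i, fun h => ?_, fun t ht => hρ i _ _ ?_⟩
    · have := hi _ h
      simp [r] at this
    · have := hi _ ht
      simpa [r] using this
  have hcol : ∀ i, Sum.inr i ∉ S → ∃ t, Sum.inl t ∈ S ∧ c t = i := by
    intro i hi
    obtain ⟨x, hx, hxc⟩ := mem_image.1 (hSc ▸ mem_univ i)
    rcases x with t | j
    · exact ⟨t, hx, hxc⟩
    · obtain rfl : j = i := hxc
      exact absurd hx hi
  refine ⟨univ.filter fun t => Sum.inl t ∈ S, univ.filter fun i => Sum.inr i ∉ S, ?_, ?_, ?_⟩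
  · obtain ⟨i, hi, -⟩ := hd t₀
    obtain ⟨t, ht, -⟩ := hcol i hi
    exact ⟨t, by simpa using ht⟩
  · simpa using hd
  · simpa using hcol

end Combinatorics
end Scarf

/-! ### Brouwer's theorem on a simplex -/

section Brouwer

open Finset

variable {I : Type*} [Fintype I]

/-- Scarf's lemma on the grid of points with coordinates in `ℕ / m`: the points of a dominating set
are close to each other, because their coordinatewise minimum over `C` has almost full mass. -/
lemma exists_almost_fixed (hcard : 2 ≤ Fintype.card I) {f : (I → ℝ) → I → ℝ}
    (hf : ContinuousOn f (stdSimplex ℝ I)) (hmaps : Set.MapsTo f (stdSimplex ℝ I) (stdSimplex ℝ I))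
    {ε : ℝ} (hε : 0 < ε) : ∃ x ∈ stdSimplex ℝ I, ∀ i, x i ≤ f x i + ε := by
  classical
  obtain ⟨δ, hδ, hunif⟩ := Metric.uniformContinuousOn_iff.1
    ((isCompact_stdSimplex ℝ I).uniformContinuousOn_of_continuous hf) (ε / 2) (half_pos hε)
  set n := Fintype.card I with hn
  obtain ⟨m, hm⟩ := exists_nat_gt ((n : ℝ) / min δ (ε / 2))
  have hmin : 0 < min δ (ε / 2) := lt_min hδ (half_pos hε)
  have hm0 : (0 : ℝ) < m := lt_of_le_of_lt (by positivity) hm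
  have hnm : (n : ℝ) / m < min δ (ε / 2) := by
    rw [div_lt_iff₀ hmin] at hm
    rw [div_lt_iff₀ hm0]
    linarith
  have hnδ := hnm.trans_le (min_le_left _ _)
  have hnε := hnm.trans_le (min_le_right _ _)
  let T := {a : I → Fin (m + 1) // ∑ i, (a i : ℕ) = m}
  have hmk : ∀ b : I → ℕ, ∑ i, b i = m → ∃ t : T, ∀ i, (t.1 i : ℕ) = b i := fun b hb =>
    ⟨⟨fun i => ⟨b i, Nat.lt_succ_of_le (hb ▸ single_le_sum (f := b) (fun _ _ => Nat.zero_le _)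
      (mem_univ i))⟩, hb⟩, fun _ => rfl⟩
  obtain ⟨i₁⟩ : Nonempty I := Fintype.card_pos_iff.1 (by omega)
  have : Nonempty T := by
    obtain ⟨t, -⟩ := hmk (Pi.single i₁ m) (by simp)
    exact ⟨t⟩
  let pt : T → I → ℝ := fun t i => (t.1 i : ℕ) / m
  have hpt : ∀ t, pt t ∈ stdSimplex ℝ I := fun t => by
    refine ⟨fun i => by positivity, ?_⟩
    simp only [pt]
    rw [← sum_div, ← Nat.cast_sum, t.2, div_self hm0.ne']
  have hcol : ∀ t, ∃ i, pt t i ≤ f (pt t) i := fun t => by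
    by_contra! h
    have := sum_lt_sum_of_nonempty ⟨i₁, mem_univ _⟩ fun i _ => h i
    rw [(hpt t).2, (hmaps (hpt t)).2] at this
    exact lt_irrefl _ this
  choose c hc using hcol
  obtain ⟨σ, C, hσ, hdom, hC⟩ :=
    Scarf.exists_dominating (T := T) hcard (fun i t => (t.1 i : ℕ)) c
  choose low hlow hlowmin using fun i => σ.exists_min_image (fun t : T => (t.1 i : ℕ)) hσ
  let a : I → ℕ := fun i => ((low i).1 i : ℕ)
  have ha : ∀ i, ∀ t ∈ σ, a i ≤ (t.1 i : ℕ) := fun i t ht => hlowmin i t ht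
  have hmass : m < ∑ i ∈ C, (a i + 1) := by
    by_contra! hle
    obtain ⟨i₀, hi₀, -⟩ := hdom this.some
    let b : I → ℕ := fun i =>
      (if i ∈ C then a i + 1 else 0) + if i = i₀ then m - ∑ i ∈ C, (a i + 1) else 0
    obtain ⟨t, ht⟩ := hmk b (by
      simp only [b]
      rw [sum_add_distrib, sum_ite_mem, univ_inter, sum_ite_eq' univ i₀, if_pos (mem_univ _)]
      omega)
    obtain ⟨i, hi, hit⟩ := hdom t
    have h1 := hit (low i) (hlow i)
    rw [ht] at h1
    simp only [b, if_pos hi, a] at h1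
    omega
  have hclose : ∀ t ∈ σ, ∀ i, (t.1 i : ℕ) ≤ (if i ∈ C then a i else 0) + n := by
    intro t ht i
    have h1 : ∑ i, (if i ∈ C then a i else 0) + n ≥ m := by
      rw [sum_ite_mem, univ_inter]
      rw [sum_add_distrib, sum_const, smul_eq_mul, mul_one] at hmass
      have := card_le_univ C
      omega
    have h2 : ∀ j, (if j ∈ C then a j else 0) ≤ (t.1 j : ℕ) := fun j => by
      split_ifs
      · exact ha j t ht
      · exact Nat.zero_le _
    have h3 := t.2
    rw [← add_sum_erase univ _ (mem_univ i)] at h3 h1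
    have h4 := sum_le_sum (s := univ.erase i) fun j _ => h2 j
    omega
  have hdiff : ∀ t ∈ σ, ∀ s ∈ σ, ∀ i, pt t i ≤ pt s i + n / m := by
    intro t ht s hs i
    have h1 := hclose t ht i
    have h2 : (if i ∈ C then a i else 0) ≤ (s.1 i : ℕ) := by
      split_ifs
      · exact ha i s hs
      · exact Nat.zero_le _
    have h3 : (t.1 i : ℕ) ≤ (s.1 i : ℕ) + n := by omega
    simp only [pt]
    rw [← add_div]
    gcongr
    exact_mod_cast h3
  obtain ⟨x, hx⟩ := hσ
  refine ⟨pt x, hpt x, fun i => ?_⟩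
  have hfi := (hmaps (hpt x)).1 i
  by_cases hi : i ∈ C
  · obtain ⟨t, ht, rfl⟩ := hC i hi
    have h1 := hdiff x hx t ht (c t)
    have h2 : dist (pt t) (pt x) < δ := by
      rw [dist_pi_lt_iff hδ]
      intro j
      rw [Real.dist_eq, abs_lt]
      have := hdiff x hx t ht j
      have := hdiff t ht x hx j
      constructor <;> linarith
    have h3 := (dist_le_pi_dist _ _ (c t)).trans_lt (hunif _ (hpt t) _ (hpt x) h2)
    rw [Real.dist_eq, abs_lt] at h3
    have := hc t
    linarith [h3.2]
  · have h1 : ((x.1 i : ℕ) : ℝ) ≤ n := by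
      have := hclose x hx i
      rw [if_neg hi] at this
      exact_mod_cast (by omega : (x.1 i : ℕ) ≤ n)
    have h2 : pt x i ≤ n / m := by
      simp only [pt]
      gcongr
    linarith

/-- **Brouwer's fixed point theorem** for the standard simplex. -/
theorem exists_fixed_stdSimplex [Nonempty I] {f : (I → ℝ) → I → ℝ}
    (hf : ContinuousOn f (stdSimplex ℝ I))
    (hmaps : Set.MapsTo f (stdSimplex ℝ I) (stdSimplex ℝ I)) :
    ∃ x ∈ stdSimplex ℝ I, f x = x := by
  classical
  -- The coordinates of `x` and `f x` have equal sums, so one inequality suffices.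
  suffices h : ∃ x ∈ stdSimplex ℝ I, ∀ i, x i ≤ f x i by
    obtain ⟨x, hx, hle⟩ := h
    refine ⟨x, hx, funext fun i => ?_⟩
    have hs : ∑ i, x i = ∑ i, f x i := by rw [hx.2, (hmaps hx).2]
    exact ((sum_eq_sum_iff_of_le fun i _ => hle i).1 hs i (mem_univ i)).symm
  obtain ⟨i₁⟩ := ‹Nonempty I›
  have hne : (stdSimplex ℝ I).Nonempty := ⟨_, single_mem_stdSimplex ℝ i₁⟩
  rcases lt_or_ge (Fintype.card I) 2 with hcard | hcard
  · have : Subsingleton I := Fintype.card_le_one_iff_subsingleton.1 (by omega)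
    obtain ⟨x, hx⟩ := hne
    refine ⟨x, hx, fun i => ?_⟩
    have h1 := hx.2
    have h2 := (hmaps hx).2
    rw [Fintype.sum_subsingleton _ i] at h1 h2
    rw [h1, h2]
  let g : (I → ℝ) → ℝ := fun x => ∑ i, max (x i - f x i) 0
  have hg : ContinuousOn g (stdSimplex ℝ I) := by
    refine continuousOn_finsetSum _ fun i _ => ContinuousOn.sup ?_ continuousOn_const
    exact (continuous_apply i).continuousOn.sub ((continuous_apply i).comp_continuousOn hf)
  obtain ⟨x, hx, hmin⟩ := (isCompact_stdSimplex ℝ I).exists_isMinOn hne hg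
  refine ⟨x, hx, fun i => ?_⟩
  by_contra! hlt
  have hn : (0 : ℝ) < Fintype.card I := by exact_mod_cast (by omega : 0 < Fintype.card I)
  have hpos : 0 < g x := by
    refine sum_pos' (fun j _ => le_max_right _ _) ⟨i, mem_univ i, ?_⟩
    exact lt_max_of_lt_left (by linarith)
  obtain ⟨y, hy, hyf⟩ := exists_almost_fixed hcard hf hmaps
    (ε := g x / (2 * Fintype.card I)) (by positivity)
  have h1 : g y ≤ ∑ _i : I, g x / (2 * Fintype.card I) :=
    sum_le_sum fun j _ => max_le (by linarith [hyf j]) (by positivity)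
  rw [sum_const, card_univ, nsmul_eq_mul] at h1
  have h2 : g x ≤ g y := hmin hy
  have h3 : (Fintype.card I : ℝ) * (g x / (2 * Fintype.card I)) = g x / 2 := by
    field_simp
  linarith

end Brouwer

/-! ### Approximate equilibria -/

section Nash

open Function

variable {ι : Type*} [Fintype ι] [DecidableEq ι] {E : ι → Type*}
  [∀ i, NormedAddCommGroup (E i)] [∀ i, NormedSpace ℝ (E i)]
  {X : ∀ i, Set (E i)} {U : ι → (∀ j, E j) → ℝ}

lemma update_mem_profiles {x : ∀ j, E j} (hx : ∀ j, x j ∈ X j) {i : ι} {y : E i} (hy : y ∈ X i) :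
    ∀ j, update x i y j ∈ X j := by
  intro j
  by_cases h : j = i
  · subst h
    simpa using hy
  · simpa [update_of_ne h] using hx j

/-- The fixed point is taken for a map on the simplex spanned by a finite net `Y` of profiles; it
puts weight only on profiles `y ∈ Y` all of whose components are almost best responses. Unlike the
set of exact best responses, these weights depend continuously on the profile. -/
lemma exists_approx_nash (hne : ∀ i, (X i).Nonempty) (hcomp : ∀ i, IsCompact (X i))
    (hconv : ∀ i, Convex ℝ (X i)) (hU : ∀ i, ContinuousOn (U i) {x | ∀ j, x j ∈ X j})
    (hqc : ∀ i (x : ∀ j, E j), (∀ j, x j ∈ X j) →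
      QuasiconvexOn ℝ (X i) (fun y => U i (update x i y)))
    {ε : ℝ} (hε : 0 < ε) :
    ∃ x : ∀ j, E j, (∀ j, x j ∈ X j) ∧ ∀ i, ∀ z ∈ X i, U i x ≤ U i (update x i z) + ε := by
  classical
  set K : Set (∀ j, E j) := {x | ∀ j, x j ∈ X j} with hK
  have hKpi : K = Set.univ.pi X := by ext; simp [hK]
  have hKcomp : IsCompact K := hKpi ▸ isCompact_univ_pi hcomp
  have hKne : K.Nonempty := ⟨fun j => (hne j).some, fun j => (hne j).some_mem⟩
  have hupd : ∀ i, ∀ z ∈ X i, ContinuousOn (fun x => U i (update x i z)) K := fun i z hz =>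
    (hU i).comp (continuous_id.update i continuous_const).continuousOn
      fun x hx => update_mem_profiles hx hz
  have hbest : ∀ x ∈ K, ∀ i, ∃ b ∈ X i, ∀ z ∈ X i, U i (update x i b) ≤ U i (update x i z) := by
    intro x hx i
    have hc : ContinuousOn (fun z => U i (update x i z)) (X i) :=
      (hU i).comp (continuous_const.update i continuous_id).continuousOn
        fun z hz => update_mem_profiles hx hz
    exact (hcomp i).exists_isMinOn (hne i) hc
  choose! b hb hbmin using hbest
  have hδ : ∃ δ > 0, ∀ i, ∀ x ∈ K, ∀ y ∈ K, dist x y < δ → dist (U i x) (U i y) < ε / 2 := by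
    choose δ hδ h using fun i => Metric.uniformContinuousOn_iff.1
      (hKcomp.uniformContinuousOn_of_continuous (hU i)) (ε / 2) (half_pos hε)
    rcases isEmpty_or_nonempty ι with hι | hι
    · exact ⟨1, one_pos, fun i => isEmptyElim i⟩
    · obtain ⟨i, hi⟩ := Finite.exists_min δ
      exact ⟨δ i, hδ i, fun j x hx y hy hxy => h j x hx y hy (hxy.trans_le (hi j))⟩
  obtain ⟨δ, hδ, hclose⟩ := hδ
  obtain ⟨Y, hYK, hYfin, hYcov⟩ := hKcomp.finite_cover_balls hδ
  have : Fintype Y := hYfin.fintype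
  -- Replacing the best response by a nearby point of the net costs less than `ε / 2`.
  have hnet : ∀ x ∈ K, ∃ y : Y, ∀ i, ∀ z ∈ X i,
      U i (update x i (y.1 i)) < U i (update x i z) + ε / 2 := by
    intro x hx
    obtain ⟨y, hy, hdist⟩ := Set.mem_iUnion₂.1 (hYcov (fun i => hb x hx i : b x ∈ K))
    refine ⟨⟨y, hy⟩, fun i z hz => ?_⟩
    have h1 : dist (update x i (y i)) (update x i (b x i)) < δ := by
      rw [dist_pi_lt_iff hδ]
      intro j
      by_cases h : j = i
      · subst h
        rw [update_self, update_self, dist_comm]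
        exact (dist_le_pi_dist _ _ j).trans_lt hdist
      · simpa [update_of_ne h] using hδ
    have h2 := hclose i _ (update_mem_profiles hx (hYK hy i)) _
      (update_mem_profiles hx (hb x hx i)) h1
    rw [Real.dist_eq, abs_lt] at h2
    linarith [h2.2, hbmin x hx i z hz]
  have : Nonempty Y := ⟨(hnet _ hKne.some_mem).choose⟩
  let gap : Y → (∀ j, E j) → ι → Y → ℝ := fun y x i y' =>
    max (U i (update x i (y'.1 i)) + ε / 2 - U i (update x i (y.1 i))) 0
  let w : Y → (∀ j, E j) → ℝ := fun y x => ∏ i, ∏ y', gap y x i y'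
  have hw0 : ∀ y x, 0 ≤ w y x := fun y x =>
    Finset.prod_nonneg fun i _ => Finset.prod_nonneg fun y' _ => le_max_right _ _
  have hwc : ∀ y, ContinuousOn (w y) K := fun y =>
    continuousOn_finsetProd _ fun i _ => continuousOn_finsetProd _ fun y' _ =>
      (((hupd i _ (hYK y'.2 i)).add continuousOn_const).sub (hupd i _ (hYK y.2 i))).sup
        continuousOn_const
  have hwpos : ∀ x ∈ K, 0 < ∑ y, w y x := by
    intro x hx
    obtain ⟨y, hy⟩ := hnet x hx
    refine Finset.sum_pos' (fun y _ => hw0 y x) ⟨y, Finset.mem_univ _, ?_⟩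
    refine Finset.prod_pos fun i _ => Finset.prod_pos fun y' _ => lt_max_of_lt_left ?_
    linarith [hy i (y'.1 i) (hYK y'.2 i)]
  have hwsupp : ∀ y x, w y x ≠ 0 → ∀ i (y' : Y),
      U i (update x i (y.1 i)) ≤ U i (update x i (y'.1 i)) + ε / 2 := by
    intro y x hw i y'
    by_contra! h
    refine hw (Finset.prod_eq_zero (Finset.mem_univ i) (Finset.prod_eq_zero (Finset.mem_univ y') ?_))
    exact max_eq_right (by linarith)
  let P : (Y → ℝ) → ∀ j, E j := fun t j => ∑ y, t y • y.1 j
  have hP : ∀ t ∈ stdSimplex ℝ Y, P t ∈ K := fun t ht j =>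
    (hconv j).sum_mem (fun y _ => ht.1 y) ht.2 fun y _ => hYK y.2 j
  have hPc : Continuous P := by fun_prop
  let f : (Y → ℝ) → Y → ℝ := fun t y => w y (P t) / ∑ y', w y' (P t)
  have hf : ContinuousOn f (stdSimplex ℝ Y) := by
    refine continuousOn_pi.2 fun y => ContinuousOn.div ?_ ?_ fun t ht => (hwpos _ (hP t ht)).ne'
    · exact (hwc y).comp hPc.continuousOn hP
    · exact continuousOn_finsetSum _ fun y' _ => (hwc y').comp hPc.continuousOn hP
  obtain ⟨t, ht, hfix⟩ := exists_fixed_stdSimplex hf fun t ht => by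
    refine ⟨fun y => div_nonneg (hw0 _ _) (hwpos _ (hP t ht)).le, ?_⟩
    simp only [f]
    rw [← Finset.sum_div, div_self (hwpos _ (hP t ht)).ne']
  have hx := hP t ht
  refine ⟨P t, hx, fun i z hz => ?_⟩
  obtain ⟨y', hy'⟩ := hnet _ hx
  have hlevel := hqc i (P t) hx (U i (update (P t) i (y'.1 i)) + ε / 2)
  have hmem : ∑ y ∈ Finset.univ.filter (fun y => t y ≠ 0), t y • y.1 i ∈
      {v ∈ X i | U i (update (P t) i v) ≤ U i (update (P t) i (y'.1 i)) + ε / 2} := by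
    refine hlevel.sum_mem (fun y _ => ht.1 y) ?_ fun y hy => ⟨hYK y.2 i, hwsupp y _ ?_ i y'⟩
    · rw [Finset.sum_filter_ne_zero, ht.2]
    · intro h0
      refine (Finset.mem_filter.1 hy).2 ?_
      rw [← congrFun hfix y]
      simp [f, h0]
  have hsum : ∑ y ∈ Finset.univ.filter (fun y => t y ≠ 0), t y • y.1 i = P t i :=
    Finset.sum_filter_of_ne fun y _ h h0 => h (by rw [h0, zero_smul])
  have h1 := hmem.2
  rw [hsum, update_eq_self] at h1
  linarith [hy' i z hz]

end Nash

/-- **Existence of a pure strategy Nash equilibrium** (corollary of the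
Arrow–Debreu theorem on abstract economies): in a game with finitely many
players `1,…,N`, where player `i` has a nonempty compact convex action set
`X i ⊆ ℝ^{n i}` and a utility `U i` (to be minimized) that is continuous on
the product of the action sets and quasi-convex in player `i`'s own action
for every fixed profile of the other players' actions, there exists a pure
strategy Nash equilibrium. -/
theorem pure_strategy_nash_exists (N : ℕ) (n : Fin N → ℕ)
    (X : ∀ i : Fin N, Set (EuclideanSpace ℝ (Fin (n i))))
    (hXne : ∀ i, (X i).Nonempty)
    (hXcomp : ∀ i, IsCompact (X i))
    (hXconv : ∀ i, Convex ℝ (X i))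
    (U : ∀ _ : Fin N, (∀ j : Fin N, EuclideanSpace ℝ (Fin (n j))) → ℝ)
    (hUcont : ∀ i, ContinuousOn (U i) {x | ∀ j, x j ∈ X j})
    (hUqc : ∀ (i : Fin N) (x : ∀ j : Fin N, EuclideanSpace ℝ (Fin (n j))),
      (∀ j, x j ∈ X j) →
      QuasiconvexOn ℝ (X i) (fun y => U i (Function.update x i y))) :
    ∃ x : ∀ j : Fin N, EuclideanSpace ℝ (Fin (n j)),
      (∀ j, x j ∈ X j) ∧
      ∀ i : Fin N, ∀ y ∈ X i, U i x ≤ U i (Function.update x i y) := by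
  have happrox : ∀ k : ℕ, ∃ x : ∀ j : Fin N, EuclideanSpace ℝ (Fin (n j)), (∀ j, x j ∈ X j) ∧
      ∀ i, ∀ z ∈ X i, U i x ≤ U i (Function.update x i z) + 1 / ((k : ℝ) + 1) := fun k =>
    exists_approx_nash hXne hXcomp hXconv hUcont hUqc Nat.one_div_pos_of_nat
  choose x hx hxU using happrox
  have hK : IsCompact {x : ∀ j : Fin N, EuclideanSpace ℝ (Fin (n j)) | ∀ j, x j ∈ X j} := by
    convert isCompact_univ_pi hXcomp using 1
    ext
    simp
  obtain ⟨a, ha, φ, hφ, hlim⟩ := hK.tendsto_subseq hx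
  refine ⟨a, ha, fun i y hy => ?_⟩
  have hl : Filter.Tendsto (fun k => U i (x (φ k))) Filter.atTop (nhds (U i a)) :=
    (hUcont i a ha).tendsto.comp
      (tendsto_nhdsWithin_iff.2 ⟨hlim, Filter.Eventually.of_forall fun k => hx (φ k)⟩)
  have hr : Filter.Tendsto (fun k => U i (Function.update (x (φ k)) i y)) Filter.atTop
      (nhds (U i (Function.update a i y))) :=
    (hUcont i _ (update_mem_profiles ha hy)).tendsto.comp
      (tendsto_nhdsWithin_iff.2 ⟨hlim.update i tendsto_const_nhds,
        Filter.Eventually.of_forall fun k => update_mem_profiles (hx (φ k)) hy⟩)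
  have hε : Filter.Tendsto (fun k => 1 / ((φ k : ℝ) + 1)) Filter.atTop (nhds 0) :=
    tendsto_one_div_add_atTop_nhds_zero_nat.comp hφ.tendsto_atTop
  have h := le_of_tendsto_of_tendsto' hl (hr.add hε) fun k => hxU (φ k) i y hy
  simpa using h
end
end

section
/- Under Assumption 1, a feasible flow f = (f_p^θ)_{p∈P,θ∈Θ} of the heterogeneous routing game is a Nash equilibrium if and only if the corresponding action profile ((f_p^{θ_1})_{p∈P}, …, (f_p^{θ_N})_{p∈P}) is a pure strategy Nash equilibrium of the associated abstract game. -/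
/-!
Fix a type `θ`. Replacing the `θ`-flow by `g` leaves all other edge flows unchanged, so the
player's utility becomes the separable function `g ↦ ∑ₑ ∫₀^{xₑ(g)} cₑ`, where `xₑ(g)` is the load
`g` puts on `e` and `cₑ` is the own-type edge cost (`ownCost`), nondecreasing on `[0, ∞)`. This is
the Beckmann potential: it is convex on the feasible set, and its derivative in the direction
`g - f` is `∑ₚ ℓₚ (gₚ - fₚ)` (`sum_ownCost_mul`).

At a Nash equilibrium this derivative is nonnegative (`sum_pathCost_mul_nonneg`), so convexity, in
the form `cₑ(a) (b - a) ≤ ∫ₐᵇ cₑ` (`mul_sub_le_integral`), makes `f` a minimizer. Conversely, if `f`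
is a minimizer and `p` carries flow, moving a small amount of flow from `p` to `p'` cannot decrease
the potential; the right derivative of this perturbation at `0` is `ℓₚ' - ℓₚ`, whence `ℓₚ ≤ ℓₚ'`.
-/

open MeasureTheory

noncomputable section

namespace HeterogeneousRouting

open scoped Classical

variable {E P Θ : Type*}

/-- Edge flow of type `θ` on edge `e` induced by the flow `f`:
`φ_e^θ(f) = ∑_{p ∈ P : e ∈ p} f_p^θ`. -/
def edgeFlow [Fintype P] (edges : P → Finset E) (f : P → Θ → ℝ) (θ : Θ) (e : E) : ℝ :=
  ∑ p ∈ Finset.univ.filter (fun p => e ∈ edges p), f p θ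

/-- Cost of path `p` for type `θ`:
`ℓ_p^θ(f) = ∑_{e ∈ p} ℓ̃_e^θ((φ_e^{θ'}(f))_{θ'})`. -/
def pathCost [Fintype P] (edges : P → Finset E) (ℓ : E → Θ → (Θ → ℝ) → ℝ)
    (f : P → Θ → ℝ) (θ : Θ) (p : P) : ℝ :=
  ∑ e ∈ edges p, ℓ e θ (fun θ' => edgeFlow edges f θ' e)

variable {K : ℕ}

/-- A flow is feasible: nonnegative and meeting the demand of each commodity for
each type. -/
def Feasible [Fintype P] (com : P → Fin K) (F : Fin K → Θ → ℝ) (f : P → Θ → ℝ) : Prop :=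
  (∀ p θ, 0 ≤ f p θ) ∧
  ∀ (k : Fin K) (θ : Θ), ∑ p ∈ Finset.univ.filter (fun p => com p = k), f p θ = F k θ

/-- Nash equilibrium of the heterogeneous routing game: for every type, every path of a
commodity carrying positive flow of that type has cost no larger than any other path of
the same commodity. -/
def IsNash [Fintype P] (edges : P → Finset E) (com : P → Fin K)
    (ℓ : E → Θ → (Θ → ℝ) → ℝ) (f : P → Θ → ℝ) : Prop :=
  ∀ (θ : Θ) (p p' : P), com p = com p' → 0 < f p θ →
    pathCost edges ℓ f θ p ≤ pathCost edges ℓ f θ p'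

/-- Utility of the player corresponding to type `θ` in the abstract game:
`U_θ(f) = ∑_e ∫_0^{φ_e^θ(f)} ℓ̃_e^θ(u, (φ_e^{θ'}(f))_{θ'≠θ}) du`, the integration being
over the `θ`-coordinate with the other coordinates fixed at the induced edge flows. -/
def Uabs [Fintype E] [Fintype P] (edges : P → Finset E) (ℓ : E → Θ → (Θ → ℝ) → ℝ)
    (θ : Θ) (f : P → Θ → ℝ) : ℝ :=
  ∑ e : E, ∫ u in (0:ℝ)..(edgeFlow edges f θ e),
    ℓ e θ (Function.update (fun θ' => edgeFlow edges f θ' e) θ u)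

/-- The flow obtained from `f` by replacing the type-`θ` path flows by `g`. -/
def updType (f : P → Θ → ℝ) (θ : Θ) (g : P → ℝ) : P → Θ → ℝ :=
  fun p => Function.update (f p) θ (g p)

/-- The cost of edge `e` to type `θ` as a function of the type's own flow `u` on `e`, the flows of
the other types being those induced by `f`. -/
def ownCost [Fintype P] (edges : P → Finset E) (ℓ : E → Θ → (Θ → ℝ) → ℝ)
    (f : P → Θ → ℝ) (θ : Θ) (e : E) (u : ℝ) : ℝ :=
  ℓ e θ (Function.update (fun θ' => edgeFlow edges f θ' e) θ u)

/-- The load that the single-type path flow `g` puts on edge `e`. -/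
def load [Fintype P] (edges : P → Finset E) (g : P → ℝ) (e : E) : ℝ :=
  ∑ p ∈ Finset.univ.filter (fun p => e ∈ edges p), g p

lemma ownCost_edgeFlow [Fintype P] (edges : P → Finset E) (ℓ : E → Θ → (Θ → ℝ) → ℝ)
    (f : P → Θ → ℝ) (θ : Θ) (e : E) :
    ownCost edges ℓ f θ e (load edges (fun p => f p θ) e)
      = ℓ e θ (fun θ' => edgeFlow edges f θ' e) := by
  unfold ownCost
  congr 1
  exact Function.update_eq_self θ (fun θ' => edgeFlow edges f θ' e)

lemma continuous_ownCost [Fintype P] (edges : P → Finset E)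
    (ℓ : E → Θ → (Θ → ℝ) → ℝ) (f : P → Θ → ℝ) (θ : Θ) (e : E) (h : Continuous (ℓ e θ)) :
    Continuous (ownCost edges ℓ f θ e) :=
  h.comp (continuous_const.update θ continuous_id)

lemma Uabs_updType [Fintype E] [Fintype P] (edges : P → Finset E)
    (ℓ : E → Θ → (Θ → ℝ) → ℝ) (f : P → Θ → ℝ) (θ : Θ) (g : P → ℝ) :
    Uabs edges ℓ θ (updType f θ g)
      = ∑ e : E, ∫ u in (0:ℝ)..(load edges g e), ownCost edges ℓ f θ e u := by
  unfold Uabs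
  refine Finset.sum_congr rfl fun e _ => ?_
  have h1 : edgeFlow edges (updType f θ g) θ e = load edges g e := by
    simp [edgeFlow, updType, load]
  rw [h1]
  congr 1
  funext u
  unfold ownCost
  congr 1
  funext θ'
  by_cases h : θ' = θ
  · subst h; simp
  · simp [Function.update_of_ne h, edgeFlow, updType]

lemma Uabs_eq [Fintype E] [Fintype P] (edges : P → Finset E)
    (ℓ : E → Θ → (Θ → ℝ) → ℝ) (f : P → Θ → ℝ) (θ : Θ) :
    Uabs edges ℓ θ f
      = ∑ e : E, ∫ u in (0:ℝ)..(load edges (fun p => f p θ) e), ownCost edges ℓ f θ e u :=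
  rfl

/-- Exchange of summation: pairing the edge costs at `f` with edge loads is the same as pairing
the path costs at `f` with path flows. -/
lemma sum_ownCost_mul [Fintype E] [Fintype P] (edges : P → Finset E)
    (ℓ : E → Θ → (Θ → ℝ) → ℝ) (f : P → Θ → ℝ) (θ : Θ) (d : P → ℝ) :
    ∑ e : E, ownCost edges ℓ f θ e (load edges (fun p => f p θ) e) * load edges d e
      = ∑ p : P, pathCost edges ℓ f θ p * d p := by
  simp only [ownCost_edgeFlow]
  simp only [load, pathCost, Finset.mul_sum, Finset.sum_mul, Finset.sum_filter, mul_ite, mul_zero]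
  rw [Finset.sum_comm]
  refine Finset.sum_congr rfl fun p _ => ?_
  rw [← Finset.sum_filter]
  exact Finset.sum_congr (by ext; simp) fun _ _ => rfl

/-- Tangent-line inequality for the antiderivative of a function nondecreasing on `[0, ∞)`; `b` may
lie on either side of `a`. -/
lemma mul_sub_le_integral {c : ℝ → ℝ} (hc : Continuous c)
    (hm : ∀ s t : ℝ, 0 ≤ s → s ≤ t → c s ≤ c t) {a b : ℝ} (ha : 0 ≤ a) (hb : 0 ≤ b) :
    c a * (b - a) ≤ ∫ u in a..b, c u := by
  rcases le_total a b with hab | hab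
  · have := intervalIntegral.integral_mono_on (μ := volume) hab
      intervalIntegrable_const (hc.intervalIntegrable a b)
      fun x hx => hm a x ha hx.1
    rw [intervalIntegral.integral_const, smul_eq_mul] at this
    linarith
  · have := intervalIntegral.integral_mono_on (μ := volume) hab
      (hc.intervalIntegrable b a) intervalIntegrable_const
      fun x hx => hm x a (hb.trans hx.1) hx.2
    rw [intervalIntegral.integral_const, smul_eq_mul] at this
    rw [intervalIntegral.integral_symm]
    linarith

/-- The variational inequality satisfied by a Nash equilibrium: no redistribution of the flow of
one type lowers its total cost at the current path costs. -/
lemma sum_pathCost_mul_nonneg [Fintype P] {com : P → Fin K} (hPk : ∀ k, ∃ p, com p = k)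
    (cost x g : P → ℝ) (hx : ∀ p, 0 ≤ x p) (hg : ∀ p, 0 ≤ g p)
    (hN : ∀ p p', com p = com p' → 0 < x p → cost p ≤ cost p')
    (hs : ∀ k : Fin K, ∑ p ∈ Finset.univ.filter (fun p => com p = k), g p
      = ∑ p ∈ Finset.univ.filter (fun p => com p = k), x p) :
    0 ≤ ∑ p, cost p * (g p - x p) := by
  have hmin : ∀ k : Fin K, ∃ q, com q = k ∧ ∀ p, com p = k → cost q ≤ cost p := by
    intro k
    obtain ⟨p₀, hp₀⟩ := hPk k
    obtain ⟨q, hq, hq'⟩ := Finset.exists_min_image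
      (Finset.univ.filter (fun p => com p = k)) cost ⟨p₀, by simp [hp₀]⟩
    exact ⟨q, by simpa using hq, fun p hp => hq' p (by simp [hp])⟩
  choose q hq hqm using hmin
  have h0 : ∑ p, cost (q (com p)) * (g p - x p) = 0 := by
    rw [← Finset.sum_fiberwise Finset.univ com]
    refine Finset.sum_eq_zero fun k _ => ?_
    have : ∑ p ∈ Finset.univ.filter (fun p => com p = k), cost (q (com p)) * (g p - x p)
        = ∑ p ∈ Finset.univ.filter (fun p => com p = k), cost (q k) * (g p - x p) :=
      Finset.sum_congr rfl fun p hp => by rw [(Finset.mem_filter.1 hp).2]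
    rw [this, ← Finset.mul_sum, Finset.sum_sub_distrib, hs k, sub_self, mul_zero]
  rw [← h0]
  refine Finset.sum_le_sum fun p _ => ?_
  have h1 := hqm (com p) p rfl
  rcases (hx p).eq_or_lt with h | h
  · rw [← h, sub_zero]
    exact mul_le_mul_of_nonneg_right h1 (hg p)
  · rw [le_antisymm h1 (hN p _ (hq (com p)).symm h)]

lemma hasDerivAt_integral_affine {c : ℝ → ℝ} (hc : Continuous c) (a d : ℝ) :
    HasDerivAt (fun t : ℝ => ∫ u in (0:ℝ)..(a + t * d), c u) (c a * d) 0 := by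
  have h1 : HasDerivAt (fun t : ℝ => a + t * d) d 0 := by
    simpa using ((hasDerivAt_id (0:ℝ)).mul_const d).const_add a
  have h2 : HasDerivAt (fun y : ℝ => ∫ u in (0:ℝ)..y, c u) (c a) (a + 0 * d) := by
    have := (hc.integral_hasStrictDerivAt 0 (a + 0 * d)).hasDerivAt
    simpa using this
  exact h2.comp (0:ℝ) h1

/-- First-order condition at the left endpoint of an interval. -/
lemma deriv_nonneg_of_right_min {h : ℝ → ℝ} {h' r : ℝ} (hd : HasDerivAt h h' 0) (hr : 0 < r)
    (hmin : ∀ t, 0 < t → t < r → h 0 ≤ h t) : 0 ≤ h' := by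
  have h1 := (hasDerivWithinAt_iff_tendsto_slope' (s := Set.Ioi 0) (by simp)).1
    hd.hasDerivWithinAt
  refine ge_of_tendsto h1 ?_
  filter_upwards [Ioo_mem_nhdsGT hr] with t ht
  rw [slope_def_field]
  exact div_nonneg (sub_nonneg.2 (hmin t ht.1 ht.2)) (by simpa using ht.1.le)

/-- **Lemma 1.** Under Assumption 1 (edge cost functions continuously differentiable,
nonnegative on nonnegative arguments, and nondecreasing in their own type's edge flow
when the other coordinates are held fixed at nonnegative values), a feasible flow of
the heterogeneous routing game is a Nash equilibrium if and only if the corresponding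
action profile is a pure strategy Nash equilibrium of the associated abstract game. -/
theorem isNash_iff_abstract_nash {E P Θ : Type*}
    [Fintype E] [Fintype P] [Fintype Θ] [DecidableEq Θ] {K : ℕ}
    (edges : P → Finset E) (com : P → Fin K) (F : Fin K → Θ → ℝ)
    (hF : ∀ k θ, 0 ≤ F k θ) (hPk : ∀ k, ∃ p, com p = k)
    (ℓ : E → Θ → (Θ → ℝ) → ℝ)
    (hC1 : ∀ e θ, ContDiff ℝ 1 (ℓ e θ))
    (hpos : ∀ (e : E) (θ : Θ) (v : Θ → ℝ), (∀ θ', 0 ≤ v θ') → 0 ≤ ℓ e θ v)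
    (hmono : ∀ (e : E) (θ : Θ) (v : Θ → ℝ), (∀ θ', 0 ≤ v θ') →
      ∀ s t : ℝ, 0 ≤ s → s ≤ t →
        ℓ e θ (Function.update v θ s) ≤ ℓ e θ (Function.update v θ t))
    (f : P → Θ → ℝ) (hfeas : Feasible com F f) :
    IsNash edges com ℓ f ↔
      ∀ (θ : Θ) (g : P → ℝ), (∀ p, 0 ≤ g p) →
        (∀ k : Fin K, ∑ p ∈ Finset.univ.filter (fun p => com p = k), g p = F k θ) →
        Uabs edges ℓ θ f ≤ Uabs edges ℓ θ (updType f θ g) := by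
  have hcont : ∀ θ e, Continuous (ownCost edges ℓ f θ e) := fun θ e =>
    continuous_ownCost edges ℓ f θ e (hC1 e θ).continuous
  obtain ⟨hf0, hfs⟩ := hfeas
  have hload : ∀ g : P → ℝ, (∀ p, 0 ≤ g p) → ∀ e, 0 ≤ load edges g e :=
    fun g hg e => Finset.sum_nonneg fun p _ => hg p
  constructor
  · intro hN θ g hg hgs
    have hm : ∀ e, ∀ s t : ℝ, 0 ≤ s → s ≤ t →
        ownCost edges ℓ f θ e s ≤ ownCost edges ℓ f θ e t := by
      intro e s t hs hst
      have := hmono e θ (fun θ' => edgeFlow edges f θ' e)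
        (fun θ' => hload _ (fun p => hf0 p θ') e) s t hs hst
      unfold ownCost
      convert this
    rw [Uabs_updType, Uabs_eq, ← sub_nonneg, ← Finset.sum_sub_distrib]
    calc 0 ≤ ∑ p, pathCost edges ℓ f θ p * (g p - f p θ) :=
          sum_pathCost_mul_nonneg hPk _ (fun p => f p θ) g (fun p => hf0 p θ) hg (hN θ)
            fun k => (hgs k).trans (hfs k θ).symm
      _ = ∑ e, ownCost edges ℓ f θ e (load edges (fun p => f p θ) e)
            * load edges (fun p => g p - f p θ) e := (sum_ownCost_mul edges ℓ f θ _).symm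
      _ ≤ _ := by
          refine Finset.sum_le_sum fun e _ => ?_
          rw [intervalIntegral.integral_interval_sub_left
            ((hcont θ e).intervalIntegrable _ _) ((hcont θ e).intervalIntegrable _ _)]
          have hl : load edges (fun p => g p - f p θ) e
              = load edges g e - load edges (fun p => f p θ) e := by
            simp [load, Finset.sum_sub_distrib]
          rw [hl]
          exact mul_sub_le_integral (hcont θ e) (hm e) (hload _ (fun p => hf0 p θ) e)
            (hload g hg e)
  · intro H θ p p' hpp hp
    -- `t * d` moves `t` units of flow from `p` to `p'` (and is zero when `p = p'`).
    set d : P → ℝ := fun q => (if q = p' then 1 else 0) - (if q = p then 1 else 0) with hd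
    have hderiv : HasDerivAt
        (fun t : ℝ => ∑ e : E, ∫ u in (0:ℝ)..(load edges (fun q => f q θ) e + t * load edges d e),
          ownCost edges ℓ f θ e u)
        (∑ e : E, ownCost edges ℓ f θ e (load edges (fun q => f q θ) e) * load edges d e) 0 :=
      HasDerivAt.fun_sum fun e _ => hasDerivAt_integral_affine (hcont θ e) _ _
    have hsum : ∑ q, pathCost edges ℓ f θ q * d q
        = pathCost edges ℓ f θ p' - pathCost edges ℓ f θ p := by
      simp [hd, mul_sub, Finset.sum_sub_distrib]
    rw [sum_ownCost_mul, hsum] at hderiv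
    refine sub_nonneg.1 (deriv_nonneg_of_right_min hderiv hp fun t ht0 htp => ?_)
    have hl : ∀ e, load edges (fun q => f q θ) e + t * load edges d e
        = load edges (fun q => f q θ + t * d q) e := by
      intro e
      simp [load, Finset.sum_add_distrib, Finset.mul_sum]
    simp only [hl, zero_mul, add_zero]
    rw [← Uabs_eq, ← Uabs_updType]
    refine H θ _ (fun q => ?_) fun k => ?_
    · have := hf0 q θ
      by_cases h1 : q = p'
      · by_cases h2 : q = p
        · simp only [hd, if_pos h1, if_pos h2]; linarith
        · simp only [hd, if_pos h1, if_neg h2]; linarith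
      · by_cases h2 : q = p
        · simp only [hd, if_neg h1, if_pos h2]; subst h2; linarith
        · simp only [hd, if_neg h1, if_neg h2]; linarith
    · rw [Finset.sum_add_distrib, hfs k θ, ← Finset.mul_sum]
      have : ∑ q ∈ Finset.univ.filter (fun q => com q = k), d q = 0 := by
        simp [hd, Finset.sum_sub_distrib, Finset.sum_ite_eq', hpp]
      rw [this, mul_zero, add_zero]

end HeterogeneousRouting
end
end

section
/- Under Assumption 1, the heterogeneous routing game admits at least one Nash equilibrium, i.e., there exists a feasible flow f such that for every commodity k, every type θ and every path p ∈ P_k with f_p^θ > 0, ℓ_p^θ(f) ≤ ℓ_{p'}^θ(f) for all p' ∈ P_k. -/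
/-!
A feasible flow `f` is a Nash equilibrium as soon as it solves the variational inequality
`∑ c(f) (g - f) ≥ 0` for all feasible `g`, where `c` collects the path costs: the test flow `g`
obtained by moving the type-`θ` flow of a used path `p` to a path `p'` of the same commodity gives
`ℓ_p ≤ ℓ_{p'}`. The feasible set is a nonempty compact convex polytope and `c` is `C¹`, so the
variational inequality is solvable (`exists_variational`) by Brouwer's theorem applied to the metric
projection of `x - c(x)`.

All maps involved are locally Lipschitz, so only this case of Brouwer's theorem is needed
(`exists_fixed_of_bounded`). It follows from the absence of Lipschitz retractions of a ball onto its
sphere (`no_retraction`), for which the volume argument of Milnor and Rogers is used: with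
`r = id + g` a retraction, `∫ det (1 + t Dg)` is a polynomial in `t`; it is the volume of the ball
for small `t`, because `id + t g` is then a bijection of the ball (`integral_det_perturb`), and it
is zero at `t = 1`, because `r` has values in the sphere.
-/

open MeasureTheory

noncomputable section

namespace HeterogeneousRouting

open scoped Classical

variable {E P Θ : Type*}

variable {K : ℕ}

/-! ### Interpolation -/

/-- Lagrange interpolation, evaluated at `1`, from `N + 1` nodes in `[0, t₀]`: the value at `1` of
a polynomial of degree at most `N` is a fixed affine combination of its values at the nodes. -/
lemma exists_nodes (N : ℕ) {t₀ : ℝ} (ht₀ : 0 < t₀) :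
    ∃ (v w : ℕ → ℝ), (∀ i ∈ Finset.range (N + 1), 0 ≤ v i ∧ v i ≤ t₀) ∧
      (∑ i ∈ Finset.range (N + 1), w i = 1) ∧
      ∀ q : Polynomial ℝ, q.natDegree ≤ N →
        q.eval 1 = ∑ i ∈ Finset.range (N + 1), w i * q.eval (v i) := by
  have hN : (0 : ℝ) < N + 1 := by positivity
  set v : ℕ → ℝ := fun i => t₀ * (i / (N + 1)) with hv
  have hinj : Set.InjOn v (Finset.range (N + 1)) := by
    intro i _ j _ hij
    simp only [hv] at hij
    have h1 := mul_left_cancel₀ ht₀.ne' hij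
    rw [div_left_inj' hN.ne'] at h1
    exact_mod_cast h1
  have key : ∀ q : Polynomial ℝ, q.natDegree ≤ N → q.eval 1 =
      ∑ i ∈ Finset.range (N + 1),
        (Lagrange.basis (Finset.range (N + 1)) v i).eval 1 * q.eval (v i) := by
    intro q hq
    have hd : q.degree < (Finset.range (N + 1)).card := by
      rw [Finset.card_range]
      exact lt_of_le_of_lt (Polynomial.natDegree_le_iff_degree_le.1 hq)
        (by exact_mod_cast Nat.lt_succ_self N)
    conv_lhs => rw [Lagrange.eq_interpolate hinj hd]
    simp [Lagrange.interpolate_apply, Polynomial.eval_finsetSum, mul_comm]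
  refine ⟨v, fun i => (Lagrange.basis (Finset.range (N + 1)) v i).eval 1, ?_, ?_, key⟩
  · intro i hi
    have hi' : (i : ℝ) ≤ N + 1 := by
      have := Finset.mem_range.1 hi
      exact_mod_cast this.le
    refine ⟨by positivity, ?_⟩
    have : (i : ℝ) / (N + 1) ≤ 1 := (div_le_one hN).2 hi'
    simp only [hv]; nlinarith
  · have := key 1 (by simp)
    simpa using this.symm

/-! ### Locally Lipschitz maps -/

section Lipschitz

open scoped NNReal

variable {V : Type*} [NormedAddCommGroup V] [InnerProductSpace ℝ V]

/-- A segment from a point inside the ball to a point outside meets the sphere, where `g` already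
vanishes. -/
lemma lipschitzWith_of_zero_outside {g : V → V} {K : ℝ≥0} {R : ℝ}
    (hg : LipschitzOnWith K g (Metric.closedBall 0 R)) (hout : ∀ x, R ≤ ‖x‖ → g x = 0) :
    LipschitzWith K g := by
  have key : ∀ x y, ‖x‖ ≤ R → R ≤ ‖y‖ → dist (g x) (g y) ≤ K * dist x y := by
    intro x y hx hy
    obtain ⟨s, hs, hsR⟩ := intermediate_value_Icc (zero_le_one' ℝ)
      (f := fun s : ℝ => ‖AffineMap.lineMap x y s‖)
      (by fun_prop) (show R ∈ Set.Icc _ _ by simpa using ⟨hx, hy⟩)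
    set z : V := AffineMap.lineMap x y s with hz
    have hsR' : ‖z‖ = R := hsR
    have h1 : dist (g x) (g z) ≤ K * dist x z :=
      hg.dist_le_mul x (by simpa using hx) z (by simp [hsR'])
    have h2 : dist x z ≤ dist x y := by
      rw [hz, dist_left_lineMap, Real.norm_of_nonneg hs.1]
      nlinarith [hs.2, dist_nonneg (x := x) (y := y)]
    rw [hout z hsR'.ge] at h1
    rw [hout y hy]
    exact h1.trans (mul_le_mul_of_nonneg_left h2 K.2)
  refine LipschitzWith.of_dist_le_mul fun x y => ?_
  rcases le_total ‖x‖ R with hx | hx <;> rcases le_total ‖y‖ R with hy | hy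
  · exact hg.dist_le_mul x (by simpa using hx) y (by simpa using hy)
  · exact key x y hx hy
  · rw [dist_comm, dist_comm x]; exact key y x hy hx
  · rw [hout x hx, hout y hy, dist_self]; positivity

lemma locallyLipschitz_smul' {f : V → ℝ} {g : V → V} (hf : LocallyLipschitz f)
    (hg : LocallyLipschitz g) : LocallyLipschitz fun x => f x • g x :=
  ((contDiff_smul (𝕜 := ℝ) (n := 1) (F := V)).locallyLipschitz (𝕂 := ℝ)).comp (hf.prodMk hg)

lemma locallyLipschitz_sub' {f g : V → V} (hf : LocallyLipschitz f)
    (hg : LocallyLipschitz g) : LocallyLipschitz fun x => f x - g x :=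
  (((contDiff_fst.sub contDiff_snd : ContDiff ℝ 1 fun p : V × V => p.1 - p.2)).locallyLipschitz
    (𝕂 := ℝ)).comp (hf.prodMk hg)

lemma locallyLipschitz_inv_max {δ : ℝ} (hδ : 0 < δ) :
    LocallyLipschitz fun s : ℝ => (max s δ)⁻¹ := by
  refine (LipschitzWith.of_dist_le' (K := (δ * δ)⁻¹) fun a b => ?_).locallyLipschitz
  have ha : δ ≤ max a δ := le_max_right _ _
  have hb : δ ≤ max b δ := le_max_right _ _
  have ha' := hδ.trans_le ha
  have hb' := hδ.trans_le hb
  have h1 : dist (max a δ) (max b δ) ≤ dist a b := by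
    simpa using (LipschitzWith.id.max_const δ : LipschitzWith 1 fun s : ℝ => max s δ).dist_le_mul a b
  rw [Real.dist_eq, inv_sub_inv ha'.ne' hb'.ne', abs_div, abs_of_pos (mul_pos ha' hb'),
    div_eq_inv_mul, abs_sub_comm, ← Real.dist_eq]
  exact mul_le_mul (inv_anti₀ (by positivity) (mul_le_mul ha hb hδ.le ha'.le)) h1 dist_nonneg
    (by positivity)

end Lipschitz

/-! ### The no-retraction theorem -/

section Brouwer

variable {V : Type*} [NormedAddCommGroup V] [InnerProductSpace ℝ V] [FiniteDimensional ℝ V]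

/-- `t ↦ det (1 + t A)` is a polynomial of degree at most the dimension. -/
lemma exists_poly_det (A : V →L[ℝ] V) :
    ∃ q : Polynomial ℝ, q.natDegree ≤ Module.finrank ℝ V ∧
      ∀ t : ℝ, q.eval t = (ContinuousLinearMap.id ℝ V + t • A).det := by
  let b := Module.finBasis ℝ V
  let M := LinearMap.toMatrix b b (A : V →ₗ[ℝ] V)
  refine ⟨Matrix.det ((Polynomial.X : Polynomial ℝ) • M.map Polynomial.C +
    (1 : Matrix _ _ ℝ).map Polynomial.C), ?_, ?_⟩
  · simpa using Polynomial.natDegree_det_X_add_C_le M 1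
  · intro t
    rw [← Polynomial.coe_evalRingHom, RingHom.map_det, ContinuousLinearMap.det,
      ← LinearMap.det_toMatrix b]
    congr 1
    ext i j
    have h1 : LinearMap.toMatrix b b
        ((ContinuousLinearMap.id ℝ V + t • A : V →L[ℝ] V) : V →ₗ[ℝ] V) = 1 + t • M := by
      rw [ContinuousLinearMap.toLinearMap_add, ContinuousLinearMap.toLinearMap_smul, map_add, map_smul,
        ContinuousLinearMap.coe_id, LinearMap.toMatrix_id]
    rw [h1]
    simp [Matrix.one_apply, apply_ite (Polynomial.eval t)]
    ring

/-- For `s ∈ [0, 1]` the operator `1 + s A` is invertible (Neumann series), so `det (1 + s A)` does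
not vanish and keeps the sign it has at `s = 0`. -/
lemma det_pos_of_small (A : V →L[ℝ] V) (hA : ‖A‖ < 1) :
    0 < (ContinuousLinearMap.id ℝ V + A).det := by
  obtain ⟨q, -, hq⟩ := exists_poly_det A
  have hne : ∀ s ∈ Set.Icc (0 : ℝ) 1, q.eval s ≠ 0 := by
    intro s hs h0
    rw [hq] at h0
    have hu : IsUnit (ContinuousLinearMap.id ℝ V + s • A) := by
      have : ‖-(s • A)‖ < 1 := by
        rw [norm_neg, norm_smul, Real.norm_of_nonneg hs.1]
        nlinarith [hs.2, norm_nonneg A]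
      have h := isUnit_one_sub_of_norm_lt_one this
      rw [sub_neg_eq_add] at h
      exact h
    have hu2 : IsUnit ((ContinuousLinearMap.id ℝ V + s • A : V →L[ℝ] V) : V →ₗ[ℝ] V) :=
      hu.map (ContinuousLinearMap.toLinearMapRingHom : (V →L[ℝ] V) →+* (V →ₗ[ℝ] V))
    exact (LinearMap.isUnit_det _ hu2).ne_zero h0
  have h0 : q.eval 0 = 1 := by rw [hq]; simp [ContinuousLinearMap.det]
  have h1 : (ContinuousLinearMap.id ℝ V + A).det = q.eval 1 := by rw [hq]; simp
  rw [h1]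
  by_contra hle
  obtain ⟨s, hs, hs0⟩ := intermediate_value_Icc' (zero_le_one' ℝ)
    (f := fun s => q.eval s) q.continuous.continuousOn
    (show (0 : ℝ) ∈ Set.Icc (q.eval 1) (q.eval 0) from ⟨not_lt.1 hle, by rw [h0]; norm_num⟩)
  exact hne s hs hs0

open scoped NNReal ENNReal Topology
open Module MeasureTheory.Measure

/-- A contractive perturbation of the identity is bijective, by Banach's fixed point theorem. -/
lemma bijective_perturb {g : V → V} {L : ℝ≥0} (hg : LipschitzWith L g) {t : ℝ} (ht : 0 ≤ t)
    (htL : t * L < 1) : Function.Bijective fun x => x + t • g x := by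
  have hlip : ∀ x y, dist (t • g x) (t • g y) ≤ t * L * dist x y := by
    intro x y
    rw [dist_smul₀, Real.norm_of_nonneg ht, mul_assoc]
    exact mul_le_mul_of_nonneg_left (hg.dist_le_mul x y) ht
  constructor
  · intro x y hxy
    by_contra hne
    have hd : 0 < dist x y := dist_pos.2 hne
    have h1 : dist x y = dist (t • g x) (t • g y) := by
      have : x - y = t • g y - t • g x := by
        have : x + t • g x = y + t • g y := hxy
        rw [sub_eq_sub_iff_add_eq_add, this, add_comm]
      rw [dist_eq_norm, this, ← dist_eq_norm, dist_comm]
    have := hlip x y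
    nlinarith
  · intro y
    have hc : ContractingWith (⟨t * L, by positivity⟩ : ℝ≥0) (fun x => y - t • g x) := by
      refine ⟨by exact_mod_cast htL, LipschitzWith.of_dist_le_mul fun a b => ?_⟩
      rw [dist_sub_left]; exact hlip a b
    refine ⟨hc.fixedPoint _, ?_⟩
    have h := hc.fixedPoint_isFixedPt
    have h' : y - t • g (hc.fixedPoint _) = hc.fixedPoint _ := h
    exact (sub_eq_iff_eq_add.1 h').symm

section Volume

variable [MeasurableSpace V] [BorelSpace V]

/-- For small `t` the map `x ↦ x + t g(x)` is a bijection of the ball onto itself, so its Jacobian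
determinant integrates to the volume of the ball. The derivative exists only almost everywhere
(Rademacher). The volume is taken to be the Hausdorff measure, which is a Haar measure and for which
Lipschitz images of null sets are null. -/
lemma integral_det_perturb {g : V → V} {L : ℝ≥0} (hg : LipschitzWith L g) {R : ℝ}
    (hout : ∀ x, R ≤ ‖x‖ → g x = 0) {t : ℝ} (ht : 0 ≤ t) (htL : t * L < 1) :
    IntegrableOn (fun x => (ContinuousLinearMap.id ℝ V + t • fderiv ℝ g x).det)
      (Metric.ball 0 R ∩ {x | DifferentiableAt ℝ g x}) μH[finrank ℝ V] ∧
    ∫ x in Metric.ball 0 R ∩ {x | DifferentiableAt ℝ g x},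
      (ContinuousLinearMap.id ℝ V + t • fderiv ℝ g x).det ∂μH[finrank ℝ V] =
      (μH[finrank ℝ V] : Measure V).real (Metric.ball 0 R) := by
  set μ : Measure V := μH[finrank ℝ V] with hμ
  set B : Set V := Metric.ball 0 R with hB
  set D : Set V := B ∩ {x | DifferentiableAt ℝ g x} with hD
  set F : V → V := fun x => x + t • g x with hF
  obtain ⟨hinj, hsurj⟩ := bijective_perturb hg ht htL
  have hmeas : MeasurableSet D :=
    measurableSet_ball.inter (measurableSet_of_differentiableAt ℝ g)
  have hfix : ∀ x, R ≤ ‖x‖ → F x = x := fun x hx => by simp [hF, hout x hx]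
  have himage : F '' B = B := by
    ext y
    constructor
    · rintro ⟨x, hx, rfl⟩
      by_contra hy
      have hy' : R ≤ ‖F x‖ := by simpa [hB] using hy
      have : F x = x := hinj (hfix _ hy')
      rw [this] at hy'
      simp [hB] at hx
      linarith
    · intro hy
      obtain ⟨x, rfl⟩ := hsurj y
      refine ⟨x, ?_, rfl⟩
      by_contra hx
      have hx' : R ≤ ‖x‖ := by simpa [hB] using hx
      have : F x ∈ B := hy
      rw [hfix x hx'] at this
      exact hx this
  have hFlip : LipschitzWith (1 + ‖t‖₊ * L) F :=
    LipschitzWith.id.add ((lipschitzWith_smul t).comp hg)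
  have hnull : μ (B \ D) = 0 := by
    have := hg.ae_differentiableAt (μ := μ)
    refine measure_mono_null ?_ this
    rintro x ⟨hx, hxD⟩ h
    exact hxD ⟨hx, h⟩
  have hnull' : μ (F '' (B \ D)) = 0 := by
    have h := hFlip.hausdorffMeasure_image_le (d := (finrank ℝ V : ℝ)) (by positivity) (B \ D)
    rw [← hμ, hnull, mul_zero] at h
    exact le_antisymm h bot_le
  have hvol : μ (F '' D) = μ B := by
    refine le_antisymm ((measure_mono (Set.image_mono Set.inter_subset_left)).trans_eq
      (by rw [himage])) ?_
    calc μ B = μ (F '' D ∪ F '' (B \ D)) := by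
          rw [← Set.image_union, Set.union_sdiff_cancel Set.inter_subset_left, himage]
      _ ≤ μ (F '' D) + μ (F '' (B \ D)) := measure_union_le _ _
      _ = μ (F '' D) := by rw [hnull', add_zero]
  have hder : ∀ x ∈ D, HasFDerivWithinAt F (ContinuousLinearMap.id ℝ V + t • fderiv ℝ g x) D x := by
    intro x hx
    exact ((hasFDerivAt_id x).add ((hx.2.hasFDerivAt).const_smul t)).hasFDerivWithinAt
  have hpos : ∀ x, |(ContinuousLinearMap.id ℝ V + t • fderiv ℝ g x).det| =
      (ContinuousLinearMap.id ℝ V + t • fderiv ℝ g x).det := by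
    intro x
    refine abs_of_pos (det_pos_of_small _ ?_)
    rw [norm_smul, Real.norm_of_nonneg ht]
    exact lt_of_le_of_lt (mul_le_mul_of_nonneg_left (norm_fderiv_le_of_lipschitz ℝ hg) ht) htL
  have h1 := integrableOn_image_iff_integrableOn_abs_det_fderiv_smul μ hmeas hder hinj.injOn
    (fun _ => (1 : ℝ))
  have h2 := integral_image_eq_integral_abs_det_fderiv_smul μ hmeas hder hinj.injOn
    (fun _ => (1 : ℝ))
  simp only [hpos, smul_eq_mul, mul_one] at h1 h2
  constructor
  · rw [← h1]
    refine integrableOn_const ?_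
    rw [hvol]; exact measure_ball_lt_top.ne
  · rw [← h2]
    simp [Measure.real, hvol]

/-- The no-retraction theorem for Lipschitz maps, with the retraction written as `x ↦ x + g x`.
`∫ det (1 + t Dg)` is a polynomial in `t` equal to the volume of the ball for small `t ≥ 0`, hence
also at `t = 1`; but `x ↦ x + g x` takes the ball into a sphere, so `det (1 + Dg) = 0`. -/
lemma no_retraction {g : V → V} {L : ℝ≥0} (hg : LipschitzWith L g) {R : ℝ} (hR : 0 < R)
    (hout : ∀ x, R ≤ ‖x‖ → g x = 0) (hin : ∀ x, ‖x‖ < R → ‖x + g x‖ = R) : False := by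
  set μ : Measure V := μH[finrank ℝ V] with hμ
  set D : Set V := Metric.ball 0 R ∩ {x | DifferentiableAt ℝ g x} with hD
  have hmeas : MeasurableSet D :=
    measurableSet_ball.inter (measurableSet_of_differentiableAt ℝ g)
  have hL : (0 : ℝ) < L + 1 := by positivity
  obtain ⟨v, w, hv, hw, hq⟩ := exists_nodes (finrank ℝ V) (t₀ := 1 / (L + 1)) (by positivity)
  have hvL : ∀ i ∈ Finset.range (finrank ℝ V + 1), v i * L < 1 := by
    intro i hi
    have h := (hv i hi).2
    rw [le_div_iff₀ hL] at h
    by_cases h0 : v i = 0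
    · simp [h0]
    · have : 0 < v i := lt_of_le_of_ne (hv i hi).1 (Ne.symm h0)
      nlinarith
  have hdet0 : ∀ x ∈ D, (ContinuousLinearMap.id ℝ V + (1 : ℝ) • fderiv ℝ g x).det = 0 := by
    intro x hx
    set A := ContinuousLinearMap.id ℝ V + (1 : ℝ) • fderiv ℝ g x with hA
    have hder : HasFDerivAt (fun x => x + g x) A x := by
      have := (hasFDerivAt_id x).add hx.2.hasFDerivAt
      simpa [hA] using! this
    have hconst : (fun y => ‖y + g y‖ ^ 2) =ᶠ[𝓝 x] fun _ => R ^ 2 := by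
      filter_upwards [Metric.isOpen_ball.mem_nhds hx.1] with y hy
      rw [hin y (by simpa using hy)]
    have h1 := hder.norm_sq
    have h2 := (hasFDerivAt_const (𝕜 := ℝ) (R ^ 2) x).congr_of_eventuallyEq hconst
    have h3 := h1.unique h2
    -- `A` has range orthogonal to `x + g x`; were it onto, `x + g x` would be orthogonal to itself
    by_contra hdet
    have hsurj : Function.Surjective A := by
      have : Function.Bijective (A : V →ₗ[ℝ] V) := by
        refine (Module.End.isUnit_iff (A : V →ₗ[ℝ] V)).1
          ((LinearMap.isUnit_iff_isUnit_det (A : V →ₗ[ℝ] V)).2 ?_)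
        exact isUnit_iff_ne_zero.2 hdet
      exact this.2
    obtain ⟨u, hu⟩ := hsurj (x + g x)
    have h4 := congrArg (fun T : V →L[ℝ] ℝ => T u) h3
    simp [hu] at h4
    have h5 := hin x (by simpa using hx.1)
    have h6 := real_inner_self_eq_norm_sq (x + g x)
    rw [inner_add_left, h5] at h6
    nlinarith [pow_pos hR 2]
  have hlag : ∀ x, (ContinuousLinearMap.id ℝ V + (1 : ℝ) • fderiv ℝ g x).det =
      ∑ i ∈ Finset.range (finrank ℝ V + 1),
        w i * (ContinuousLinearMap.id ℝ V + v i • fderiv ℝ g x).det := by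
    intro x
    obtain ⟨q, hdeg, hqe⟩ := exists_poly_det (fderiv ℝ g x)
    simpa only [hqe] using hq q hdeg
  have hI : ∫ x in D, (ContinuousLinearMap.id ℝ V + (1 : ℝ) • fderiv ℝ g x).det ∂μ =
      μ.real (Metric.ball 0 R) := by
    simp_rw [hlag]
    rw [integral_finsetSum]
    · calc _ = ∑ i ∈ Finset.range (finrank ℝ V + 1), w i * μ.real (Metric.ball 0 R) := by
            refine Finset.sum_congr rfl fun i hi => ?_
            rw [integral_const_mul,
              (integral_det_perturb hg hout (hv i hi).1 (hvL i hi)).2]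
        _ = _ := by rw [← Finset.sum_mul, hw, one_mul]
    · intro i hi
      exact (integral_det_perturb hg hout (hv i hi).1 (hvL i hi)).1.const_mul _
  rw [setIntegral_congr_fun hmeas hdet0] at hI
  simp only [integral_zero] at hI
  have : 0 < μ.real (Metric.ball 0 R) :=
    ENNReal.toReal_pos (Metric.measure_ball_pos μ 0 hR).ne' measure_ball_lt_top.ne
  exact this.ne hI

end Volume

/-! ### Fixed points and variational inequalities -/

/-- Brouwer's fixed point theorem for locally Lipschitz bounded self-maps of a Euclidean space. A
fixed-point-free `H` is cut off to vanish for `‖x‖ ≥ 2M`; then `G = id - η H` has no zero and is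
the identity on the sphere of radius `2M`, so `2M G / ‖G‖` retracts the ball onto that sphere. -/
lemma exists_fixed_of_bounded {H : V → V} (hH : LocallyLipschitz H) {M : ℝ} (hM : 0 < M)
    (hHM : ∀ x, ‖H x‖ < M) : ∃ x, H x = x := by
  borelize V
  by_contra hno
  push Not at hno
  set η : V → ℝ := fun x => max (min (2 - M⁻¹ * ‖x‖) 1) 0 with hη
  have hη0 : ∀ x, 0 ≤ η x := fun x => le_max_right _ _
  have hη1 : ∀ x, η x ≤ 1 := fun x => max_le (min_le_right _ _) zero_le_one
  have hηin : ∀ x, ‖x‖ ≤ M → η x = 1 := by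
    intro x hx
    have : M⁻¹ * ‖x‖ ≤ 1 := by rw [inv_mul_le_iff₀ hM]; linarith
    simp only [hη]
    rw [min_eq_right (by linarith), max_eq_left zero_le_one]
  have hηout : ∀ x, 2 * M ≤ ‖x‖ → η x = 0 := by
    intro x hx
    have : 2 ≤ M⁻¹ * ‖x‖ := by rw [le_inv_mul_iff₀ hM]; linarith
    simp only [hη]
    rw [max_eq_right]
    exact (min_le_left _ _).trans (by linarith)
  have hnorm : LocallyLipschitz fun x : V => ‖x‖ := lipschitzWith_one_norm.locallyLipschitz
  have hηlip : LocallyLipschitz η := by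
    refine LocallyLipschitz.max_const (LocallyLipschitz.min_const ?_ 1) 0
    exact ((show ContDiff ℝ 1 fun s : ℝ => 2 - M⁻¹ * s by fun_prop).locallyLipschitz
      (𝕂 := ℝ)).comp hnorm
  set G : V → V := fun x => x - η x • H x with hG
  have hGlip : LocallyLipschitz G :=
    locallyLipschitz_sub' LocallyLipschitz.id (locallyLipschitz_smul' hηlip hH)
  have hG0 : ∀ x, G x ≠ 0 := by
    intro x hx
    have hx' : x = η x • H x := sub_eq_zero.1 hx
    rcases le_total ‖x‖ M with h | h
    · rw [hηin x h, one_smul] at hx'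
      exact hno x hx'.symm
    · have h2 : ‖x‖ ≤ ‖H x‖ := by
        conv_lhs => rw [hx']
        rw [norm_smul, Real.norm_of_nonneg (hη0 x)]
        nlinarith [hη1 x, norm_nonneg (H x)]
      linarith [hHM x]
  obtain ⟨δ, hδ, hGδ⟩ : ∃ δ > 0, ∀ x ∈ Metric.closedBall (0 : V) (2 * M), δ ≤ ‖G x‖ := by
    obtain ⟨z, hz, hmin⟩ := (isCompact_closedBall (0 : V) (2 * M)).exists_isMinOn
      ⟨0, by simp [hM.le]⟩ hGlip.continuous.norm.continuousOn
    exact ⟨‖G z‖, norm_pos_iff.2 (hG0 z), fun x hx => hmin hx⟩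
  -- `r` is the radial projection of `G` onto the sphere of radius `2M`
  set r : V → V := fun x => (2 * M) • ((max ‖G x‖ δ)⁻¹ • G x) with hr
  have hrlip : LocallyLipschitz r := by
    refine locallyLipschitz_smul' (LocallyLipschitz.const _) (locallyLipschitz_smul' ?_ hGlip)
    exact (locallyLipschitz_inv_max hδ).comp
      ((lipschitzWith_one_norm.locallyLipschitz : LocallyLipschitz fun x : V => ‖x‖).comp hGlip)
  have hrnorm : ∀ x, ‖x‖ ≤ 2 * M → ‖r x‖ = 2 * M := by
    intro x hx
    have h1 := hGδ x (by simpa using hx)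
    have h2 : ‖G x‖ ≠ 0 := norm_ne_zero_iff.2 (hG0 x)
    simp only [hr]
    rw [max_eq_left h1, norm_smul, norm_smul, norm_inv, norm_norm, inv_mul_cancel₀ h2, mul_one,
      Real.norm_of_nonneg (by positivity)]
  have hrfix : ∀ x, ‖x‖ = 2 * M → r x = x := by
    intro x hx
    have h1 := hGδ x (by simp [hx])
    have h2 : G x = x := by simp [hG, hηout x hx.ge]
    simp only [hr]
    rw [max_eq_left h1, h2, hx, smul_smul, mul_inv_cancel₀ (by positivity), one_smul]
  set g : V → V := fun x => if ‖x‖ ≤ 2 * M then r x - x else 0 with hg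
  have hgout : ∀ x, 2 * M ≤ ‖x‖ → g x = 0 := by
    intro x hx
    simp only [hg]
    split_ifs with h
    · rw [hrfix x (le_antisymm h hx), sub_self]
    · rfl
  obtain ⟨K, hK⟩ := LocallyLipschitzOn.exists_lipschitzOnWith_of_compact
    (isCompact_closedBall (0 : V) (2 * M))
    ((locallyLipschitz_sub' hrlip LocallyLipschitz.id).locallyLipschitzOn)
  have hgK : LipschitzOnWith K g (Metric.closedBall 0 (2 * M)) := by
    have heq : ∀ x ∈ Metric.closedBall (0 : V) (2 * M), g x = r x - x := by
      intro x hx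
      simp only [hg]
      rw [if_pos (by simpa using hx)]
    intro x hx y hy
    rw [heq x hx, heq y hy]
    exact hK hx hy
  refine no_retraction (lipschitzWith_of_zero_outside hgK hgout) (R := 2 * M) (by positivity)
    hgout fun x hx => ?_
  simp only [hg, if_pos hx.le, add_sub_cancel]
  exact hrnorm x hx.le

open scoped InnerProductSpace in
/-- The variational inequality of a locally Lipschitz map `c` on a compact convex set `C` is
solvable: its solutions are the fixed points of `x ↦ π (π x - c (π x))`, where `π` is the metric
projection onto `C`, a nonexpansive map. -/
lemma exists_variational {C : Set V} (hne : C.Nonempty) (hcp : IsCompact C) (hcv : Convex ℝ C)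
    {c : V → V} (hc : LocallyLipschitz c) :
    ∃ x ∈ C, ∀ w ∈ C, 0 ≤ ⟪c x, w - x⟫_ℝ := by
  have hproj : ∀ u : V, ∃ v ∈ C, ∀ w ∈ C, ⟪u - v, w - v⟫_ℝ ≤ 0 := by
    intro u
    obtain ⟨v, hv, hmin⟩ := exists_norm_eq_iInf_of_complete_convex hne hcp.isComplete hcv u
    exact ⟨v, hv, (norm_eq_iInf_iff_real_inner_le_zero hcv hv).1 hmin⟩
  choose π hπC hπ using hproj
  have hπlip : LipschitzWith 1 π := by
    refine LipschitzWith.mk_one fun x y => ?_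
    have h1 := hπ x (π y) (hπC y)
    have h2 := hπ y (π x) (hπC x)
    have h3 : ⟪x - y, π x - π y⟫_ℝ - ⟪π x - π y, π x - π y⟫_ℝ =
        -(⟪x - π x, π y - π x⟫_ℝ + ⟪y - π y, π x - π y⟫_ℝ) := by
      simp only [inner_sub_left, inner_sub_right]; ring
    have h4 := real_inner_le_norm (x - y) (π x - π y)
    rw [real_inner_self_eq_norm_sq] at h3
    rw [dist_eq_norm, dist_eq_norm]
    by_contra hlt
    have h5 : 0 < ‖π x - π y‖ := (norm_nonneg _).trans_lt (not_le.1 hlt)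
    nlinarith
  have hπid : ∀ x ∈ C, π x = x := by
    intro x hx
    have h := hπ x x hx
    rw [real_inner_self_eq_norm_sq] at h
    have : ‖x - π x‖ = 0 := by nlinarith [norm_nonneg (x - π x)]
    exact (sub_eq_zero.1 (norm_eq_zero.1 this)).symm
  obtain ⟨M, hM⟩ := hcp.isBounded.exists_norm_le
  have hπl := hπlip.locallyLipschitz
  obtain ⟨x, hx⟩ := exists_fixed_of_bounded (H := fun x => π (π x - c (π x)))
    (hπl.comp (locallyLipschitz_sub' hπl (hc.comp hπl))) (M := max M 0 + 1) (by positivity)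
    (fun x => ((hM _ (hπC _)).trans (le_max_left _ _)).trans_lt (lt_add_one _))
  have hx' : π (π x - c (π x)) = x := hx
  have hxC : x ∈ C := hx' ▸ hπC _
  rw [hπid x hxC] at hx'
  refine ⟨x, hxC, fun w hw => ?_⟩
  have h := hπ (x - c x) w hw
  rw [hx', sub_sub_cancel_left, inner_neg_left] at h
  linarith

end Brouwer
/-! ### Existence of equilibria -/

/-- **Theorem 2 (existence of a Nash equilibrium).** Under Assumption 1 (edge cost
functions continuously differentiable, nonnegative on nonnegative arguments, and
nondecreasing in their own type's edge flow when the other coordinates are held fixed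
at nonnegative values), the heterogeneous routing game admits at least one Nash
equilibrium. -/
theorem nash_exists {E P Θ : Type*}
    [Fintype E] [Fintype P] [Fintype Θ] [DecidableEq Θ] {K : ℕ}
    (edges : P → Finset E) (com : P → Fin K) (F : Fin K → Θ → ℝ)
    (hF : ∀ k θ, 0 ≤ F k θ) (hPk : ∀ k, ∃ p, com p = k)
    (ℓ : E → Θ → (Θ → ℝ) → ℝ)
    (hC1 : ∀ e θ, ContDiff ℝ 1 (ℓ e θ))
    (hpos : ∀ (e : E) (θ : Θ) (v : Θ → ℝ), (∀ θ', 0 ≤ v θ') → 0 ≤ ℓ e θ v)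
    (hmono : ∀ (e : E) (θ : Θ) (v : Θ → ℝ), (∀ θ', 0 ≤ v θ') →
      ∀ s t : ℝ, 0 ≤ s → s ≤ t →
        ℓ e θ (Function.update v θ s) ≤ ℓ e θ (Function.update v θ t)) :
    ∃ f : P → Θ → ℝ, Feasible com F f ∧ IsNash edges com ℓ f := by
  -- the feasible polytope and the path cost map, in Euclidean coordinates
  let flow : EuclideanSpace ℝ (P × Θ) → P → Θ → ℝ := fun x p θ => x (p, θ)
  let C : Set (EuclideanSpace ℝ (P × Θ)) := {x | Feasible com F (flow x)}
  let c : EuclideanSpace ℝ (P × Θ) → EuclideanSpace ℝ (P × Θ) :=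
    fun x => WithLp.toLp 2 fun i => pathCost edges ℓ (flow x) i.2 i.1
  have hcoord : ∀ i : P × Θ, ContDiff ℝ 1 fun x : EuclideanSpace ℝ (P × Θ) => x i := fun i => by fun_prop
  have hc : ContDiff ℝ 1 c := by
    rw [contDiff_euclidean]
    intro i
    refine ContDiff.sum fun e _ => (hC1 e i.2).comp (contDiff_pi.2 fun θ' => ?_)
    exact ContDiff.sum fun p _ => hcoord (p, θ')
  have hclosed : IsClosed C := by
    have : C = (⋂ p, ⋂ θ, {x : EuclideanSpace ℝ (P × Θ) | 0 ≤ x (p, θ)}) ∩ ⋂ k, ⋂ θ,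
        {x : EuclideanSpace ℝ (P × Θ) | ∑ p ∈ Finset.univ.filter (fun p => com p = k), x (p, θ) = F k θ} := by
      ext x; simp [C, Feasible, flow]
    rw [this]
    refine (isClosed_iInter fun p => isClosed_iInter fun θ => ?_).inter
      (isClosed_iInter fun k => isClosed_iInter fun θ => ?_)
    · exact isClosed_le continuous_const (hcoord _).continuous
    · exact isClosed_eq (continuous_finsetSum _ fun p _ => (hcoord _).continuous)
        continuous_const
  have hle : ∀ x ∈ C, ∀ p θ, x (p, θ) ≤ F (com p) θ := by
    intro x hx p θ
    rw [← hx.2 (com p) θ]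
    exact Finset.single_le_sum (f := fun p => flow x p θ) (fun q _ => hx.1 q θ) (by simp)
  have hbdd : Bornology.IsBounded C := by
    refine isBounded_iff_forall_norm_le.2
      ⟨Real.sqrt (∑ i : P × Θ, (F (com i.1) i.2) ^ 2), fun x hx => ?_⟩
    rw [EuclideanSpace.norm_eq]
    refine Real.sqrt_le_sqrt (Finset.sum_le_sum fun i _ => ?_)
    rw [Real.norm_of_nonneg (hx.1 i.1 i.2)]
    exact pow_le_pow_left₀ (hx.1 i.1 i.2) (hle x hx i.1 i.2) 2
  have hcomp : IsCompact C := Metric.isCompact_of_isClosed_isBounded hclosed hbdd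
  have hconv : Convex ℝ C := by
    intro x hx y hy a b ha hb hab
    refine ⟨fun p θ => ?_, fun k θ => ?_⟩
    · exact add_nonneg (mul_nonneg ha (hx.1 p θ)) (mul_nonneg hb (hy.1 p θ))
    · have h1 := hx.2 k θ
      have h2 := hy.2 k θ
      calc ∑ p ∈ Finset.univ.filter (fun p => com p = k), flow (a • x + b • y) p θ
          = a * ∑ p ∈ Finset.univ.filter (fun p => com p = k), flow x p θ +
            b * ∑ p ∈ Finset.univ.filter (fun p => com p = k), flow y p θ := by
              rw [Finset.mul_sum, Finset.mul_sum, ← Finset.sum_add_distrib]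
              rfl
        _ = F k θ := by rw [h1, h2, ← add_mul, hab, one_mul]
  have hne : C.Nonempty := by
    choose q hq using hPk
    -- all the demand of commodity `k` is routed on the single path `q k`
    refine ⟨WithLp.toLp 2 fun i => if i.1 = q (com i.1) then F (com i.1) i.2 else 0,
      fun p θ => ?_, fun k θ => ?_⟩
    · simp only [flow]
      split_ifs
      · exact hF _ _
      · exact le_rfl
    · simp only [flow]
      rw [Finset.sum_eq_single (q k)]
      · simp [hq]
      · intro p hp hpk
        have hpk' : com p = k := by simpa using hp
        rw [hpk', if_neg hpk]
      · intro h
        exact absurd (by simp [hq]) h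
  obtain ⟨x, hxC, hx⟩ := exists_variational hne hcomp hconv (hc.locallyLipschitz (𝕂 := ℝ))
  refine ⟨flow x, hxC, fun θ p p' hpp hpos' => ?_⟩
  -- test the variational inequality against moving all type-`θ` flow on `p` to `p'`
  have hw := hx (x + x (p, θ) • (EuclideanSpace.single (p', θ) (1 : ℝ) -
    EuclideanSpace.single (p, θ) (1 : ℝ))) ?_
  · rw [add_sub_cancel_left, inner_smul_right, inner_sub_right,
      EuclideanSpace.inner_single_right, EuclideanSpace.inner_single_right] at hw
    have h := (mul_nonneg_iff_of_pos_left hpos').1 hw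
    simpa [c] using h
  · have hval : ∀ q τ, flow (x + x (p, θ) • (EuclideanSpace.single (p', θ) (1 : ℝ) -
        EuclideanSpace.single (p, θ) (1 : ℝ))) q τ = flow x q τ + flow x p θ *
          ((if (q, τ) = (p', θ) then 1 else 0) - (if (q, τ) = (p, θ) then 1 else 0)) := by
      intro q τ
      simp [flow]
    refine ⟨fun q τ => ?_, fun k τ => ?_⟩
    · rw [hval]
      have h0 := hxC.1 q τ
      have h1 := hxC.1 p θ
      by_cases h2 : (q, τ) = (p, θ)
      · obtain ⟨rfl, rfl⟩ := Prod.mk.inj h2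
        rw [if_pos rfl]
        split_ifs <;> nlinarith
      · rw [if_neg h2]
        split_ifs <;> nlinarith
    · simp only [hval]
      rw [Finset.sum_add_distrib, hxC.2 k τ, ← Finset.mul_sum, Finset.sum_sub_distrib]
      have hs : ∀ s : P, ∑ q ∈ Finset.univ.filter (fun q => com q = k),
          (if (q, τ) = (s, θ) then (1 : ℝ) else 0) = if com s = k ∧ τ = θ then 1 else 0 := by
        intro s
        by_cases hτ : τ = θ <;> simp [hτ, Finset.sum_ite_eq']
      rw [hs, hs, hpp, sub_self, mul_zero, add_zero]

end HeterogeneousRouting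
end
end

section
/- Suppose each edge cost function ℓ̃_e^θ is continuously differentiable. If the abstract game admits a potential function V of class C², then for all types θ_i, θ_j ∈ Θ, all paths p_1, p_2 ∈ P, and every flow f ∈ ℝ^{|P|·|Θ|}, one has Σ_{e ∈ p_1 ∩ p_2} [ ∂ℓ̃_e^{θ_j}/∂φ^{θ_i}((φ_e^{θ'}(f))_{θ'∈Θ}) − ∂ℓ̃_e^{θ_i}/∂φ^{θ_j}((φ_e^{θ'}(f))_{θ'∈Θ}) ] = 0, where ∂/∂φ^{θ} denotes the partial derivative with respect to the θ-coordinate. -/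
/-!
For a type `θ` and a path `p` let `D θ p` (`unitFlow θ p`) be one unit of type `θ` on `p`. Moving along `D θ p`
is a unilateral deviation of the player `θ`, so the potential condition and the fundamental theorem
of calculus give `∂V/∂f_p^θ = pathCost f θ p` at every flow `f` (`fderiv_potential`). Since `V` is
`C²`, its second derivative is symmetric, so differentiating the cost of `p₂` for `θⱼ` along
`D θᵢ p₁` gives the same value as differentiating the cost of `p₁` for `θᵢ` along `D θⱼ p₂`.
Only edges shared by both paths contribute to these derivatives (`hasDerivAt_pathCost`), and the
difference of the two is the asserted sum.
-/

open MeasureTheory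

noncomputable section

namespace HeterogeneousRouting

open scoped Classical

variable {E P Θ : Type*}

variable {K : ℕ}

/-- The flow that sends one unit of type `θ` along the path `p` and nothing else. -/
def unitFlow (θ : Θ) (p : P) : P → Θ → ℝ := Pi.single p (Pi.single θ 1)

/-- Adding `t` units of type `θ` on `p` shifts the `θ`-coordinate of the edge flows of the edges
of `p`, and nothing else. -/
lemma edgeFlow_line [Fintype P] (edges : P → Finset E) (f : P → Θ → ℝ) (θ : Θ) (p : P) (t : ℝ)
    (e : E) :
    (fun θ' => edgeFlow edges (f + t • unitFlow θ p) θ' e) =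
      if e ∈ edges p then
        Function.update (fun θ' => edgeFlow edges f θ' e) θ (edgeFlow edges f θ e + t)
      else fun θ' => edgeFlow edges f θ' e := by
  have key : ∀ θ', edgeFlow edges (f + t • unitFlow θ p) θ' e =
      edgeFlow edges f θ' e + if e ∈ edges p then (if θ' = θ then t else 0) else 0 := by
    intro θ'
    have h : ∀ q, (f + t • unitFlow θ p) q θ' =
        f q θ' + if q = p then (if θ' = θ then t else 0) else 0 := by
      intro q
      by_cases hq : q = p
      · subst hq
        by_cases hθ : θ' = θ <;> simp [unitFlow, hθ]
      · simp [unitFlow, hq]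
    simp only [edgeFlow, h, Finset.sum_add_distrib, Finset.sum_ite_eq', Finset.mem_filter,
      Finset.mem_univ, true_and]
  funext θ'
  rw [key]
  by_cases he : e ∈ edges p
  · by_cases hθ : θ' = θ
    · subst hθ; simp [he]
    · simp [he, hθ]
  · simp [he]

lemma add_smul_unitFlow (f : P → Θ → ℝ) (θ : Θ) (p : P) (t : ℝ) :
    f + t • unitFlow θ p = updType f θ (fun q => f q θ + if q = p then t else 0) := by
  funext q θ'
  by_cases hq : q = p
  · subst hq
    by_cases hθ : θ' = θ
    · subst hθ; simp [unitFlow, updType]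
    · simp [unitFlow, updType, hθ]
  · by_cases hθ : θ' = θ
    · subst hθ; simp [unitFlow, updType, hq]
    · simp [unitFlow, updType, hq, hθ]

/-- The marginal utility of player `θ` for flow on the path `p` is the cost of `p`. -/
lemma hasDerivAt_Uabs [Fintype E] [Fintype P] (edges : P → Finset E)
    (ℓ : E → Θ → (Θ → ℝ) → ℝ) (hc : ∀ e θ, Continuous (ℓ e θ)) (f : P → Θ → ℝ) (θ : Θ) (p : P) :
    HasDerivAt (fun t : ℝ => Uabs edges ℓ θ (f + t • unitFlow θ p))
      (pathCost edges ℓ f θ p) 0 := by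
  have hcost : pathCost edges ℓ f θ p =
      ∑ e : E, if e ∈ edges p then ℓ e θ (fun θ' => edgeFlow edges f θ' e) else 0 := by
    simp [pathCost, Finset.sum_ite_mem]
  rw [hcost]
  unfold Uabs
  refine HasDerivAt.fun_sum fun e _ => ?_
  -- The remaining coordinates do not see the deviation: only the upper limit depends on `t`.
  have hline : ∀ t : ℝ, (∫ u in (0:ℝ)..(edgeFlow edges (f + t • unitFlow θ p) θ e),
      ℓ e θ (Function.update (fun θ' => edgeFlow edges (f + t • unitFlow θ p) θ' e) θ u)) =
      ∫ u in (0:ℝ)..(if e ∈ edges p then edgeFlow edges f θ e + t else edgeFlow edges f θ e),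
        ℓ e θ (Function.update (fun θ' => edgeFlow edges f θ' e) θ u) := by
    intro t
    have h := edgeFlow_line edges f θ p t e
    have hθ : edgeFlow edges (f + t • unitFlow θ p) θ e = _ := congrFun h θ
    rw [h, hθ]
    by_cases he : e ∈ edges p <;> simp [he]
  simp only [hline]
  by_cases he : e ∈ edges p
  · simp only [he, if_true]
    have hcont : Continuous fun u : ℝ =>
        ℓ e θ (Function.update (fun θ' => edgeFlow edges f θ' e) θ u) :=
      (hc e θ).comp (continuous_const.update θ continuous_id)
    have h1 := (hcont.integral_hasStrictDerivAt 0 (edgeFlow edges f θ e + 0)).hasDerivAt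
    have h2 := h1.comp_const_add (edgeFlow edges f θ e) (0 : ℝ)
    simpa [Function.update_eq_self] using h2
  · simp only [he, if_false]
    exact hasDerivAt_const _ _

/-- The gradient of a potential is the vector of path costs. -/
lemma fderiv_potential [Fintype E] [Fintype P] [Fintype Θ] (edges : P → Finset E)
    (ℓ : E → Θ → (Θ → ℝ) → ℝ) (hc : ∀ e θ, Continuous (ℓ e θ))
    (V : (P → Θ → ℝ) → ℝ) (hV : Differentiable ℝ V)
    (hpot : ∀ (θ : Θ) (f : P → Θ → ℝ) (g : P → ℝ),
      V (updType f θ g) - V f = Uabs edges ℓ θ (updType f θ g) - Uabs edges ℓ θ f)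
    (f : P → Θ → ℝ) (θ : Θ) (p : P) :
    fderiv ℝ V f (unitFlow θ p) = pathCost edges ℓ f θ p := by
  have h1 := (hV f).hasFDerivAt.hasLineDerivAt (unitFlow θ p)
  have h2 : HasDerivAt (fun t : ℝ => V (f + t • unitFlow θ p)) (pathCost edges ℓ f θ p) 0 := by
    have h3 := (hasDerivAt_Uabs edges ℓ hc f θ p).add_const (V f - Uabs edges ℓ θ f)
    refine h3.congr_of_eventuallyEq (Filter.Eventually.of_forall fun t => ?_)
    have := hpot θ f (fun q => f q θ + if q = p then t else 0)
    rw [← add_smul_unitFlow] at this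
    simp only []
    linarith
  exact HasDerivAt.unique h1 h2

/-- Along the unit flow of type `θ` on `p`, the cost of `p'` changes only through the edges common
to `p` and `p'`. -/
lemma hasDerivAt_pathCost [Fintype P] [Fintype Θ] (edges : P → Finset E)
    (ℓ : E → Θ → (Θ → ℝ) → ℝ) (hd : ∀ e θ, Differentiable ℝ (ℓ e θ)) (f : P → Θ → ℝ)
    (θ θ' : Θ) (p p' : P) :
    HasDerivAt (fun t : ℝ => pathCost edges ℓ (f + t • unitFlow θ p) θ' p')
      (∑ e ∈ edges p ∩ edges p',
        deriv (fun t => ℓ e θ' (Function.update (fun η => edgeFlow edges f η e) θ t))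
          (edgeFlow edges f θ e)) 0 := by
  have hsum : (∑ e ∈ edges p ∩ edges p',
        deriv (fun t => ℓ e θ' (Function.update (fun η => edgeFlow edges f η e) θ t))
          (edgeFlow edges f θ e)) = ∑ e ∈ edges p', if e ∈ edges p then
        deriv (fun t => ℓ e θ' (Function.update (fun η => edgeFlow edges f η e) θ t))
          (edgeFlow edges f θ e) else 0 := by
    rw [Finset.sum_ite_mem, Finset.inter_comm]
  rw [hsum]
  unfold pathCost
  refine HasDerivAt.fun_sum fun e _ => ?_
  simp only [edgeFlow_line]
  by_cases he : e ∈ edges p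
  · simp only [he, if_true]
    have hdiff : Differentiable ℝ fun t : ℝ =>
        ℓ e θ' (Function.update (fun η => edgeFlow edges f η e) θ t) :=
      (hd e θ').comp fun t => (hasDerivAt_update _ θ t).differentiableAt
    have h1 := (hdiff (edgeFlow edges f θ e + 0)).hasDerivAt
    have h2 := h1.comp_const_add (edgeFlow edges f θ e) (0 : ℝ)
    simpa using h2
  · simp only [he, if_false]
    exact hasDerivAt_const _ _

/-- **Lemma 3 (necessity).** Suppose each edge cost function is continuously
differentiable. If the abstract game admits a potential function `V` of class `C²`,
then for all types `θᵢ, θⱼ`, all paths `p₁, p₂` and every flow `f`,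
`∑_{e∈p₁∩p₂} [∂ℓ̃_e^{θⱼ}/∂φ^{θᵢ} − ∂ℓ̃_e^{θᵢ}/∂φ^{θⱼ}] = 0`, the partial derivatives
being evaluated at the induced edge-flow vector. -/
theorem potential_necessary_condition {E P Θ : Type*}
    [Fintype E] [Fintype P] [Fintype Θ] [DecidableEq Θ]
    (edges : P → Finset E) (ℓ : E → Θ → (Θ → ℝ) → ℝ)
    (hC1 : ∀ e θ, ContDiff ℝ 1 (ℓ e θ))
    (V : (P → Θ → ℝ) → ℝ) (hV : ContDiff ℝ 2 V)
    (hpot : ∀ (θ : Θ) (f : P → Θ → ℝ) (g : P → ℝ),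
      V (updType f θ g) - V f = Uabs edges ℓ θ (updType f θ g) - Uabs edges ℓ θ f) :
    ∀ (θi θj : Θ) (p1 p2 : P) (f : P → Θ → ℝ),
      ∑ e ∈ edges p1 ∩ edges p2,
        (deriv (fun t => ℓ e θj
            (Function.update (fun θ' => edgeFlow edges f θ' e) θi t))
          (edgeFlow edges f θi e) -
         deriv (fun t => ℓ e θi
            (Function.update (fun θ' => edgeFlow edges f θ' e) θj t))
          (edgeFlow edges f θj e)) = 0 := by
  intro θi θj p1 p2 f
  -- The definitions use classical decidability, so the given instance is replaced by it.
  obtain rfl : (‹DecidableEq Θ› : DecidableEq Θ) = fun a b => Classical.propDecidable (a = b) :=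
    Subsingleton.elim _ _
  have hgrad := fderiv_potential edges ℓ (fun e θ => (hC1 e θ).continuous) V
    (hV.differentiable (by norm_num)) hpot
  have hd : ∀ e θ, Differentiable ℝ (ℓ e θ) := fun e θ => (hC1 e θ).differentiable (by norm_num)
  have hsecond : ∀ (θ θ' : Θ) (p p' : P),
      fderiv ℝ (fderiv ℝ V) f (unitFlow θ p) (unitFlow θ' p') =
        ∑ e ∈ edges p ∩ edges p',
          deriv (fun t => ℓ e θ' (Function.update (fun η => edgeFlow edges f η e) θ t))
            (edgeFlow edges f θ e) := by
    intro θ θ' p p'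
    have hdV : DifferentiableAt ℝ (fderiv ℝ V) f :=
      (hV.fderiv_right (m := 1) (by norm_num)).differentiable (by norm_num) f
    have h1 : HasDerivAt (fun t : ℝ => fderiv ℝ V (f + t • unitFlow θ p)) _ 0 :=
      hdV.hasFDerivAt.hasLineDerivAt (unitFlow θ p)
    have h2 := h1.clm_apply (hasDerivAt_const (0 : ℝ) (unitFlow θ' p'))
    simp only [hgrad, map_zero, add_zero] at h2
    exact h2.unique (hasDerivAt_pathCost edges ℓ hd f θ θ' p p')
  have hsymm := (hV.contDiffAt (x := f)).isSymmSndFDerivAt (by simp)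
    (unitFlow θi p1) (unitFlow θj p2)
  rw [hsecond, hsecond, Finset.inter_comm (edges p2)] at hsymm
  rw [Finset.sum_sub_distrib, hsymm, sub_self]

end HeterogeneousRouting
end
end

section
/- Suppose Θ = {θ_1, θ_2} and each edge cost function ℓ̃_e^θ : ℝ² → ℝ is continuously differentiable. If for all paths p_1, p_2 ∈ P and every flow f ∈ ℝ^{|P|·2}, Σ_{e ∈ p_1 ∩ p_2} [ ∂_1 ℓ̃_e^{θ_2}(φ_e^{θ_1}(f), φ_e^{θ_2}(f)) − ∂_2 ℓ̃_e^{θ_1}(φ_e^{θ_1}(f), φ_e^{θ_2}(f)) ] = 0, then the function V defined by V(f) = Σ_{e∈E} [ ∫_0^{φ_e^{θ_1}(f)} ℓ̃_e^{θ_1}(u_1, φ_e^{θ_2}(f)) du_1 + ∫_0^{φ_e^{θ_2}(f)} ℓ̃_e^{θ_2}(φ_e^{θ_1}(f), u_2) du_2 − ∫_0^{φ_e^{θ_2}(f)} ∫_0^{φ_e^{θ_1}(f)} ∂_2 ℓ̃_e^{θ_1}(u_1, u_2) du_1 du_2 ] is a potential function for the abstract game. -/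
/-!
Write `x_e`, `y_e` for the flows of types `θ₁`, `θ₂` on the edge `e`. By Fubini and the fundamental
theorem of calculus, the double integral of `∂₂ℓ₁` over `[0, x_e] × [0, y_e]` is
`∫_0^{x_e} ℓ₁(u, y_e) du - ∫_0^{x_e} ℓ₁(u, 0) du`, so `V - U₂ = ∑_e ∫_0^{x_e} ℓ₁(u, 0) du` does not
depend on the action of player 2; this half needs no symmetry. For player 1 the same computation
applies once `∂₂ℓ₁` has been replaced by `∂₁ℓ₂` in the double integrals, which is legitimate after
summation over edges (`sum_integral_partial_eq`): rescaling to the unit square turns the difference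
into the integral over `(s, t)` of `∑_e x_e y_e (∂₁ℓ₂ - ∂₂ℓ₁)(s x_e, t y_e)`, and expanding
`x_e y_e` over pairs of paths (`sum_edgeFlow_mul_eq_zero`) makes this a combination of the symmetry
sums at the flow in which type `θ₁` is scaled by `s` and type `θ₂` by `t`.
-/

open MeasureTheory

noncomputable section

namespace RoutingGame

open scoped Classical

variable {E P : Type*}

/-- Edge flow of one type on edge `e` induced by the path flows `g` of that type:
`φ_e = ∑_{p ∈ P : e ∈ p} g_p`. -/
def edgeFlow [Fintype P] (edges : P → Finset E) (g : P → ℝ) (e : E) : ℝ :=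
  ∑ p ∈ Finset.univ.filter (fun p => e ∈ edges p), g p

/-- Utility of player 1 (type `θ₁`) in the abstract game:
`U₁(g,h) = ∑_e ∫_0^{φ_e^{θ₁}} ℓ̃_e^{θ₁}(u, φ_e^{θ₂}) du`. -/
def U1 [Fintype E] [Fintype P] (edges : P → Finset E) (ℓ1 : E → ℝ → ℝ → ℝ)
    (g h : P → ℝ) : ℝ :=
  ∑ e : E, ∫ u in (0:ℝ)..(edgeFlow edges g e), ℓ1 e u (edgeFlow edges h e)

/-- Utility of player 2 (type `θ₂`) in the abstract game:
`U₂(g,h) = ∑_e ∫_0^{φ_e^{θ₂}} ℓ̃_e^{θ₂}(φ_e^{θ₁}, u) du`. -/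
def U2 [Fintype E] [Fintype P] (edges : P → Finset E) (ℓ2 : E → ℝ → ℝ → ℝ)
    (g h : P → ℝ) : ℝ :=
  ∑ e : E, ∫ u in (0:ℝ)..(edgeFlow edges h e), ℓ2 e (edgeFlow edges g e) u

/-- `V` is a potential function for the two-player abstract game associated with
edge cost functions `ℓ1, ℓ2` (arguments of `V`: path flows of type `θ₁`, of type `θ₂`). -/
def IsPotential [Fintype E] [Fintype P] (edges : P → Finset E)
    (ℓ1 ℓ2 : E → ℝ → ℝ → ℝ) (V : (P → ℝ) → (P → ℝ) → ℝ) : Prop :=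
  (∀ g g' h : P → ℝ, V g h - V g' h = U1 edges ℓ1 g h - U1 edges ℓ1 g' h) ∧
  (∀ g h h' : P → ℝ, V g h - V g h' = U2 edges ℓ2 g h - U2 edges ℓ2 g h')

/-- The candidate potential function
`V(f) = ∑_e [∫_0^{φ₁} ℓ₁(u,φ₂) du + ∫_0^{φ₂} ℓ₂(φ₁,u) du − ∫_0^{φ₂}∫_0^{φ₁} ∂₂ℓ₁(u₁,u₂) du₁ du₂]`. -/
def Vpot [Fintype E] [Fintype P] (edges : P → Finset E)
    (ℓ1 ℓ2 : E → ℝ → ℝ → ℝ) (g h : P → ℝ) : ℝ :=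
  ∑ e : E,
    ((∫ u in (0:ℝ)..(edgeFlow edges g e), ℓ1 e u (edgeFlow edges h e)) +
     (∫ u in (0:ℝ)..(edgeFlow edges h e), ℓ2 e (edgeFlow edges g e) u) -
     ∫ u2 in (0:ℝ)..(edgeFlow edges h e),
       ∫ u1 in (0:ℝ)..(edgeFlow edges g e), deriv (fun t => ℓ1 e u1 t) u2)

/-- The partial derivative in the second variable of a `C¹` function of two real variables is
jointly continuous, and it is a genuine derivative (not the junk value of `deriv`). -/
lemma partial_snd {f : ℝ → ℝ → ℝ} (hf : ContDiff ℝ 1 (fun q : ℝ × ℝ => f q.1 q.2)) :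
    (∀ x y, HasDerivAt (fun t => f x t) (deriv (fun t => f x t) y) y) ∧
      Continuous (fun q : ℝ × ℝ => deriv (fun t => f q.1 t) q.2) := by
  have key : ∀ x y, HasDerivAt (fun t => f x t)
      (fderiv ℝ (fun q : ℝ × ℝ => f q.1 q.2) (x, y) (0, 1)) y := by
    intro x y
    have h1 := (hf.differentiable (by norm_num) (x, y)).hasFDerivAt
    have h2 : HasDerivAt (fun t : ℝ => (x, t)) ((0 : ℝ), (1 : ℝ)) y :=
      (hasDerivAt_const y x).prodMk (hasDerivAt_id y)
    exact h1.comp_hasDerivAt y h2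
  refine ⟨fun x y => (key x y).differentiableAt.hasDerivAt, ?_⟩
  have e : (fun q : ℝ × ℝ => deriv (fun t => f q.1 t) q.2) =
      fun q => fderiv ℝ (fun q : ℝ × ℝ => f q.1 q.2) q (0, 1) := by
    funext q
    exact (key q.1 q.2).deriv
  rw [e]
  exact (hf.continuous_fderiv (by norm_num)).clm_apply continuous_const

lemma partial_fst {f : ℝ → ℝ → ℝ} (hf : ContDiff ℝ 1 (fun q : ℝ × ℝ => f q.1 q.2)) :
    (∀ x y, HasDerivAt (fun t => f t y) (deriv (fun t => f t y) x) x) ∧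
      Continuous (fun q : ℝ × ℝ => deriv (fun t => f t q.2) q.1) := by
  have hs : ContDiff ℝ 1 (fun q : ℝ × ℝ => (fun a b => f b a) q.1 q.2) :=
    hf.comp (contDiff_snd.prodMk contDiff_fst)
  obtain ⟨h1, h2⟩ := partial_snd (f := fun a b => f b a) hs
  exact ⟨fun x y => h1 y x, h2.comp (continuous_snd.prodMk continuous_fst)⟩

/-- Fubini for a jointly continuous integrand. -/
lemma integral_swap_of_continuous {F : ℝ → ℝ → ℝ}
    (hF : Continuous (fun q : ℝ × ℝ => F q.1 q.2)) (a b c d : ℝ) :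
    ∫ x in a..b, ∫ y in c..d, F x y = ∫ y in c..d, ∫ x in a..b, F x y := by
  apply intervalIntegral_intervalIntegral_swap
  have hK : IntegrableOn (Function.uncurry F) (Set.uIcc a b ×ˢ Set.uIcc c d) :=
    (show Continuous (Function.uncurry F) from hF).continuousOn.integrableOn_compact
      (isCompact_uIcc.prod isCompact_uIcc)
  exact hK.mono_set (Set.prod_mono Set.uIoc_subset_uIcc Set.uIoc_subset_uIcc)

lemma integral_integral_deriv_snd {f : ℝ → ℝ → ℝ}
    (hf : ContDiff ℝ 1 (fun q : ℝ × ℝ => f q.1 q.2)) (x y : ℝ) :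
    ∫ u2 in (0 : ℝ)..y, ∫ u1 in (0 : ℝ)..x, deriv (fun t => f u1 t) u2 =
      (∫ u in (0 : ℝ)..x, f u y) - ∫ u in (0 : ℝ)..x, f u 0 := by
  obtain ⟨hd, hc⟩ := partial_snd hf
  have hcf : Continuous (fun q : ℝ × ℝ => f q.1 q.2) := hf.continuous
  have hci : ∀ b : ℝ, IntervalIntegrable (fun u => f u b) volume 0 x := fun b =>
    Continuous.intervalIntegrable
      (hcf.comp (continuous_id.prodMk continuous_const) : Continuous fun u => f u b) _ _
  rw [← integral_swap_of_continuous hc, ← intervalIntegral.integral_sub (hci y) (hci 0)]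
  refine intervalIntegral.integral_congr fun u _ => ?_
  exact intervalIntegral.integral_eq_sub_of_hasDerivAt (fun t _ => hd u t)
    (Continuous.intervalIntegrable
      (hc.comp (continuous_const.prodMk continuous_id) :
        Continuous fun t => deriv (fun t => f u t) t) _ _)

lemma integral_integral_deriv_fst {f : ℝ → ℝ → ℝ}
    (hf : ContDiff ℝ 1 (fun q : ℝ × ℝ => f q.1 q.2)) (x y : ℝ) :
    ∫ u2 in (0 : ℝ)..y, ∫ u1 in (0 : ℝ)..x, deriv (fun t => f t u2) u1 =
      (∫ u in (0 : ℝ)..y, f x u) - ∫ u in (0 : ℝ)..y, f 0 u := by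
  have hs : ContDiff ℝ 1 (fun q : ℝ × ℝ => (fun a b => f b a) q.1 q.2) :=
    hf.comp (contDiff_snd.prodMk contDiff_fst)
  rw [integral_swap_of_continuous
    (F := fun u2 u1 => deriv (fun t => f t u2) u1) (partial_snd (f := fun a b => f b a) hs).2]
  exact integral_integral_deriv_snd (f := fun a b => f b a) hs y x

/-- Integration over a rectangle with corner at the origin, rescaled to the unit square. It holds
for degenerate rectangles and for negative side lengths too. -/
lemma integral_integral_rescale (F : ℝ → ℝ → ℝ) (x y : ℝ) :
    ∫ u2 in (0 : ℝ)..y, ∫ u1 in (0 : ℝ)..x, F u1 u2 =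
      ∫ t in (0 : ℝ)..1, ∫ s in (0 : ℝ)..1, y * (x * F (x * s) (y * t)) := by
  have h1 := intervalIntegral.mul_integral_comp_mul_left (a := 0) (b := 1) (c := y)
    (f := fun u2 => ∫ u1 in (0 : ℝ)..x, F u1 u2)
  simp only [mul_zero, mul_one] at h1
  rw [← h1, ← intervalIntegral.integral_const_mul]
  refine intervalIntegral.integral_congr fun t _ => ?_
  have h2 := intervalIntegral.mul_integral_comp_mul_left (a := 0) (b := 1) (c := x)
    (f := fun u1 => F u1 (y * t))
  simp only [mul_zero, mul_one] at h2
  simp only [← h2, intervalIntegral.integral_const_mul]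

lemma edgeFlow_smul [Fintype P] (edges : P → Finset E) (c : ℝ) (g : P → ℝ) (e : E) :
    edgeFlow edges (fun p => c * g p) e = edgeFlow edges g e * c := by
  rw [mul_comm]
  exact (Finset.mul_sum _ _ _).symm

/-- Expanding both edge flows over paths: an edge `e` contributes to the pair `(p₁, p₂)` exactly
when `e ∈ p₁ ∩ p₂`, so the symmetry condition yields a weighted identity over all edges. -/
lemma sum_edgeFlow_mul_eq_zero [Fintype E] [Fintype P] (edges : P → Finset E) (D : E → ℝ)
    (hD : ∀ p1 p2 : P, ∑ e ∈ edges p1 ∩ edges p2, D e = 0) (g h : P → ℝ) :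
    ∑ e : E, edgeFlow edges h e * (edgeFlow edges g e * D e) = 0 := by
  have hexp : ∀ e : E, edgeFlow edges h e * (edgeFlow edges g e * D e) =
      ∑ p1 : P, ∑ p2 : P, g p1 * h p2 * (if e ∈ edges p1 ∩ edges p2 then D e else 0) := by
    intro e
    simp only [edgeFlow, Finset.sum_filter]
    rw [← mul_assoc, mul_comm (∑ p, _) (∑ p, _), Finset.sum_mul_sum, Finset.sum_mul]
    refine Finset.sum_congr rfl fun p1 _ => ?_
    rw [Finset.sum_mul]
    refine Finset.sum_congr rfl fun p2 _ => ?_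
    by_cases h1 : e ∈ edges p1 <;> by_cases h2 : e ∈ edges p2 <;> simp [h1, h2]
  simp only [hexp]
  rw [Finset.sum_comm]
  refine Finset.sum_eq_zero fun p1 _ => ?_
  rw [Finset.sum_comm]
  refine Finset.sum_eq_zero fun p2 _ => ?_
  rw [← Finset.mul_sum, Finset.sum_ite_mem, Finset.univ_inter, hD, mul_zero]

/-- The double integrals of the cross derivatives `∂₂ℓ₁` and `∂₁ℓ₂` agree after summing over edges.
Once each rectangle `[0, φ_e^{θ₁}] × [0, φ_e^{θ₂}]` is rescaled to the unit square, the symmetry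
condition at the scaled flow `(s g, t h)` makes the summed integrands agree at `(s, t)`. -/
lemma sum_integral_partial_eq [Fintype E] [Fintype P]
    (edges : P → Finset E) (ℓ1 ℓ2 : E → ℝ → ℝ → ℝ)
    (hℓ1 : ∀ e, ContDiff ℝ 1 (fun q : ℝ × ℝ => ℓ1 e q.1 q.2))
    (hℓ2 : ∀ e, ContDiff ℝ 1 (fun q : ℝ × ℝ => ℓ2 e q.1 q.2))
    (hsym : ∀ (p1 p2 : P) (g h : P → ℝ),
      ∑ e ∈ edges p1 ∩ edges p2,
        (deriv (fun t => ℓ2 e t (edgeFlow edges h e)) (edgeFlow edges g e) -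
         deriv (fun t => ℓ1 e (edgeFlow edges g e) t) (edgeFlow edges h e)) = 0)
    (g h : P → ℝ) :
    ∑ e : E, ∫ u2 in (0 : ℝ)..(edgeFlow edges h e),
        ∫ u1 in (0 : ℝ)..(edgeFlow edges g e), deriv (fun t => ℓ1 e u1 t) u2 =
      ∑ e : E, ∫ u2 in (0 : ℝ)..(edgeFlow edges h e),
        ∫ u1 in (0 : ℝ)..(edgeFlow edges g e), deriv (fun t => ℓ2 e t u2) u1 := by
  have hc1 := fun e => (partial_snd (hℓ1 e)).2
  have hc2 := fun e => (partial_fst (hℓ2 e)).2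
  -- On the unit square, a finite sum over edges commutes with both integrals.
  have hpull : ∀ F : E → ℝ → ℝ → ℝ, (∀ e, Continuous (fun q : ℝ × ℝ => F e q.1 q.2)) →
      ∑ e : E, ∫ u2 in (0 : ℝ)..(edgeFlow edges h e),
          ∫ u1 in (0 : ℝ)..(edgeFlow edges g e), F e u1 u2 =
        ∫ t in (0 : ℝ)..1, ∫ s in (0 : ℝ)..1, ∑ e : E, edgeFlow edges h e *
          (edgeFlow edges g e * F e (edgeFlow edges g e * s) (edgeFlow edges h e * t)) := by
    intro F hF
    have hcont : ∀ e, Continuous (Function.uncurry fun t s : ℝ => edgeFlow edges h e *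
        (edgeFlow edges g e * F e (edgeFlow edges g e * s) (edgeFlow edges h e * t))) := by
      intro e
      have hm : Continuous fun q : ℝ × ℝ =>
          (edgeFlow edges g e * q.2, edgeFlow edges h e * q.1) := by fun_prop
      exact continuous_const.mul (continuous_const.mul ((hF e).comp hm))
    rw [Finset.sum_congr rfl fun e _ => integral_integral_rescale (F e) _ _,
      ← intervalIntegral.integral_finsetSum]
    · refine intervalIntegral.integral_congr fun t _ => ?_
      refine (intervalIntegral.integral_finsetSum fun e _ => ?_).symm
      exact Continuous.intervalIntegrable
        ((hcont e).comp (continuous_const.prodMk continuous_id)) _ _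
    · intro e _
      exact (intervalIntegral.continuous_parametric_intervalIntegral_of_continuous'
        (hcont e) 0 1).intervalIntegrable _ _
  rw [hpull _ hc1, hpull (fun e u1 u2 => deriv (fun t => ℓ2 e t u2) u1) hc2]
  refine intervalIntegral.integral_congr fun t _ => ?_
  refine intervalIntegral.integral_congr fun s _ => ?_
  have h0 := sum_edgeFlow_mul_eq_zero edges _
    (fun p1 p2 => hsym p1 p2 (fun p => s * g p) (fun p => t * h p)) g h
  simp only [edgeFlow_smul, mul_sub, Finset.sum_sub_distrib] at h0
  exact (sub_eq_zero.mp h0).symm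

/-- **Lemma 4 (sufficiency).** With two types and continuously differentiable edge
cost functions, if `∑_{e∈p₁∩p₂} [∂₁ℓ̃_e^{θ₂}(φ₁,φ₂) − ∂₂ℓ̃_e^{θ₁}(φ₁,φ₂)] = 0` for all
paths `p₁,p₂` and all flows, then `Vpot` is a potential function for the abstract game. -/
theorem vpot_isPotential_of_sym {E P : Type*} [Fintype E] [Fintype P]
    (edges : P → Finset E) (ℓ1 ℓ2 : E → ℝ → ℝ → ℝ)
    (hℓ1 : ∀ e, ContDiff ℝ 1 (fun q : ℝ × ℝ => ℓ1 e q.1 q.2))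
    (hℓ2 : ∀ e, ContDiff ℝ 1 (fun q : ℝ × ℝ => ℓ2 e q.1 q.2))
    (hsym : ∀ (p1 p2 : P) (g h : P → ℝ),
      ∑ e ∈ edges p1 ∩ edges p2,
        (deriv (fun t => ℓ2 e t (edgeFlow edges h e)) (edgeFlow edges g e) -
         deriv (fun t => ℓ1 e (edgeFlow edges g e) t) (edgeFlow edges h e)) = 0) :
    IsPotential edges ℓ1 ℓ2 (Vpot edges ℓ1 ℓ2) := by
  have hV2 : ∀ g h : P → ℝ, Vpot edges ℓ1 ℓ2 g h =
      U2 edges ℓ2 g h + ∑ e : E, ∫ u in (0 : ℝ)..(edgeFlow edges g e), ℓ1 e u 0 := by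
    intro g h
    simp only [Vpot, U2, integral_integral_deriv_snd (hℓ1 _), ← Finset.sum_add_distrib]
    exact Finset.sum_congr rfl fun e _ => by ring
  have hV1 : ∀ g h : P → ℝ, Vpot edges ℓ1 ℓ2 g h =
      U1 edges ℓ1 g h + ∑ e : E, ∫ u in (0 : ℝ)..(edgeFlow edges h e), ℓ2 e 0 u := by
    intro g h
    rw [Vpot, Finset.sum_sub_distrib, sum_integral_partial_eq edges ℓ1 ℓ2 hℓ1 hℓ2 hsym g h]
    simp only [U1, integral_integral_deriv_fst (hℓ2 _), Finset.sum_add_distrib,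
      Finset.sum_sub_distrib]
    ring
  exact ⟨fun g g' h => by rw [hV1, hV1]; ring, fun g h h' => by rw [hV2, hV2]; ring⟩

end RoutingGame
end
end

section
/- Suppose Θ = {θ_1, θ_2} and each edge cost function ℓ̃_e^θ : ℝ² → ℝ is continuously differentiable. Then the abstract game admits a potential function V of class C² if and only if for all paths p_1, p_2 ∈ P and every flow f ∈ ℝ^{|P|·2}, Σ_{e ∈ p_1 ∩ p_2} [ ∂_1 ℓ̃_e^{θ_2}(φ_e^{θ_1}(f), φ_e^{θ_2}(f)) − ∂_2 ℓ̃_e^{θ_1}(φ_e^{θ_1}(f), φ_e^{θ_2}(f)) ] = 0. -/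
/-!
The function `V` is a potential exactly when its partial derivatives in the two players' flows are
those of `U₁` and `U₂`. By the fundamental theorem of calculus this says that `V` is a primitive of
the 1-form `ω_q = ∑_e (ℓ₁ₑ(φ₁,φ₂) dφ₁ + ℓ₂ₑ(φ₁,φ₂) dφ₂)` (`potentialForm`), which is of class `C¹`;
see `isPotential_iff`.

If such a `V` is `C²`, its second derivative is symmetric, so `ω` is closed. Conversely, if `ω` is
closed, the Poincaré lemma on the whole flow space gives a primitive, which is `C²` because its
derivative `ω` is `C¹`. Finally
`dω(x, y) - dω(y, x) = ∑_e (∂₁ℓ₂ₑ - ∂₂ℓ₁ₑ) (φₑ(x₁) φₑ(y₂) - φₑ(y₁) φₑ(x₂))`, and expanding this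
bilinear expression in the standard basis of path flows shows that it vanishes identically exactly
when all the sums over `p₁ ∩ p₂` vanish.
-/

open MeasureTheory

noncomputable section

namespace RoutingGame

open scoped Classical

variable {E P : Type*}

/-! ### The 1-form of marginal costs -/

/-- The edge flow on `e` as a continuous linear functional of the path flows. -/
def flowCLM [Fintype P] (edges : P → Finset E) (e : E) : (P → ℝ) →L[ℝ] ℝ :=
  ∑ p ∈ Finset.univ.filter (fun p => e ∈ edges p), ContinuousLinearMap.proj p

lemma flowCLM_apply [Fintype P] (edges : P → Finset E) (e : E) (g : P → ℝ) :
    flowCLM edges e g = edgeFlow edges g e := by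
  simp [flowCLM, edgeFlow]

lemma edgeFlow_single [Fintype P] (edges : P → Finset E) (p : P) (e : E) :
    edgeFlow edges (Pi.single p 1) e = if e ∈ edges p then 1 else 0 := by
  simp [edgeFlow, Pi.single_apply, Finset.sum_ite_eq']

lemma edgeFlow_zero [Fintype P] (edges : P → Finset E) (e : E) :
    edgeFlow edges 0 e = 0 := by
  simp [edgeFlow]

/-- The 1-form `∑_e (ℓ₁ₑ(φ₁,φ₂) dφ₁ + ℓ₂ₑ(φ₁,φ₂) dφ₂)` on the space of flows, whose primitives are
the differentiable potential functions. -/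
def potentialForm [Fintype E] [Fintype P] (edges : P → Finset E) (ℓ1 ℓ2 : E → ℝ → ℝ → ℝ)
    (q : (P → ℝ) × (P → ℝ)) : ((P → ℝ) × (P → ℝ)) →L[ℝ] ℝ :=
  ∑ e : E,
    (ℓ1 e (edgeFlow edges q.1 e) (edgeFlow edges q.2 e) •
        (flowCLM edges e).comp (ContinuousLinearMap.fst ℝ _ _) +
     ℓ2 e (edgeFlow edges q.1 e) (edgeFlow edges q.2 e) •
        (flowCLM edges e).comp (ContinuousLinearMap.snd ℝ _ _))

lemma potentialForm_apply [Fintype E] [Fintype P] (edges : P → Finset E)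
    (ℓ1 ℓ2 : E → ℝ → ℝ → ℝ) (q x : (P → ℝ) × (P → ℝ)) :
    potentialForm edges ℓ1 ℓ2 q x = ∑ e : E,
      (ℓ1 e (edgeFlow edges q.1 e) (edgeFlow edges q.2 e) * edgeFlow edges x.1 e +
       ℓ2 e (edgeFlow edges q.1 e) (edgeFlow edges q.2 e) * edgeFlow edges x.2 e) := by
  simp [potentialForm, flowCLM_apply]

lemma contDiff_edgeCost [Fintype P] (edges : P → Finset E) {L : ℝ → ℝ → ℝ}
    (hL : ContDiff ℝ 1 (fun q : ℝ × ℝ => L q.1 q.2)) (e : E) :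
    ContDiff ℝ 1 (fun q : (P → ℝ) × (P → ℝ) =>
      L (edgeFlow edges q.1 e) (edgeFlow edges q.2 e)) := by
  simp only [← flowCLM_apply]
  exact hL.comp (f := fun q : (P → ℝ) × (P → ℝ) => (flowCLM edges e q.1, flowCLM edges e q.2))
    (by fun_prop)

lemma contDiff_potentialForm [Fintype E] [Fintype P] (edges : P → Finset E)
    {ℓ1 ℓ2 : E → ℝ → ℝ → ℝ}
    (hℓ1 : ∀ e, ContDiff ℝ 1 (fun q : ℝ × ℝ => ℓ1 e q.1 q.2))
    (hℓ2 : ∀ e, ContDiff ℝ 1 (fun q : ℝ × ℝ => ℓ2 e q.1 q.2)) :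
    ContDiff ℝ 1 (potentialForm edges ℓ1 ℓ2) :=
  ContDiff.sum fun e _ =>
    ((contDiff_edgeCost edges (hℓ1 e) e).smul contDiff_const).add
      ((contDiff_edgeCost edges (hℓ2 e) e).smul contDiff_const)

/-! ### The derivative of the 1-form -/

/-- The chain rule for a cost function of two variables evaluated along a straight line of flows,
in terms of the two partial derivatives. -/
lemma hasDerivAt_cost_line {L : ℝ → ℝ → ℝ}
    (hL : ContDiff ℝ 1 (fun q : ℝ × ℝ => L q.1 q.2)) (a b c d : ℝ) :
    HasDerivAt (fun t : ℝ => L (a + t * c) (b + t * d))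
      (deriv (fun t => L t b) a * c + deriv (fun t => L a t) b * d) 0 := by
  have hF := ((hL.differentiable one_ne_zero) (a, b)).hasFDerivAt
  set F := fderiv ℝ (fun q : ℝ × ℝ => L q.1 q.2) (a, b)
  have line (c d : ℝ) : HasDerivAt (fun t : ℝ => L (a + t * c) (b + t * d)) (F (c, d)) 0 := by
    have h1 : HasDerivAt (fun t : ℝ => (a + t * c, b + t * d)) (c, d) 0 := by
      have := (((hasDerivAt_id (0 : ℝ)).mul_const c).const_add a).prodMk
        (((hasDerivAt_id (0 : ℝ)).mul_const d).const_add b)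
      simpa using this
    have hF' : HasFDerivAt (fun q : ℝ × ℝ => L q.1 q.2) F
        ((fun t : ℝ => (a + t * c, b + t * d)) 0) := by simpa using hF
    exact hF'.comp_hasDerivAt 0 h1
  have e1 : deriv (fun t => L t b) a = F (1, 0) := by
    have h : HasDerivAt (fun t : ℝ => (t, b)) (1, 0) a :=
      (hasDerivAt_id a).prodMk (hasDerivAt_const a b)
    exact (hF.comp_hasDerivAt a h).deriv
  have e2 : deriv (fun t => L a t) b = F (0, 1) := by
    have h : HasDerivAt (fun t : ℝ => (a, t)) (0, 1) b :=
      (hasDerivAt_const b a).prodMk (hasDerivAt_id b)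
    exact (hF.comp_hasDerivAt b h).deriv
  have hcd : F (c, d) = F (1, 0) * c + F (0, 1) * d := by
    have : ((c, d) : ℝ × ℝ) = c • (1, 0) + d • (0, 1) := by simp
    rw [this, map_add, map_smul, map_smul, smul_eq_mul, smul_eq_mul]
    ring
  rw [e1, e2, ← hcd]
  exact line c d

lemma edgeFlow_add_smul [Fintype P] (edges : P → Finset E) (g v : P → ℝ) (t : ℝ) (e : E) :
    edgeFlow edges (g + t • v) e = edgeFlow edges g e + t * edgeFlow edges v e := by
  simp [← flowCLM_apply]

lemma fderiv_potentialForm [Fintype E] [Fintype P] (edges : P → Finset E)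
    {ℓ1 ℓ2 : E → ℝ → ℝ → ℝ}
    (hℓ1 : ∀ e, ContDiff ℝ 1 (fun q : ℝ × ℝ => ℓ1 e q.1 q.2))
    (hℓ2 : ∀ e, ContDiff ℝ 1 (fun q : ℝ × ℝ => ℓ2 e q.1 q.2))
    (q x y : (P → ℝ) × (P → ℝ)) :
    fderiv ℝ (potentialForm edges ℓ1 ℓ2) q x y = ∑ e : E,
      ((deriv (fun t => ℓ1 e t (edgeFlow edges q.2 e)) (edgeFlow edges q.1 e) *
            edgeFlow edges x.1 e +
          deriv (fun t => ℓ1 e (edgeFlow edges q.1 e) t) (edgeFlow edges q.2 e) *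
            edgeFlow edges x.2 e) * edgeFlow edges y.1 e +
       (deriv (fun t => ℓ2 e t (edgeFlow edges q.2 e)) (edgeFlow edges q.1 e) *
            edgeFlow edges x.1 e +
          deriv (fun t => ℓ2 e (edgeFlow edges q.1 e) t) (edgeFlow edges q.2 e) *
            edgeFlow edges x.2 e) * edgeFlow edges y.2 e) := by
  have hω := ((contDiff_potentialForm edges hℓ1 hℓ2).differentiable one_ne_zero q).hasFDerivAt
  have hline : HasDerivAt (fun t : ℝ => q + t • x) x 0 := by
    simpa using ((hasDerivAt_id (0 : ℝ)).smul_const x).const_add q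
  have hω' : HasFDerivAt (potentialForm edges ℓ1 ℓ2) (fderiv ℝ (potentialForm edges ℓ1 ℓ2) q)
      ((fun t : ℝ => q + t • x) 0) := by simpa using hω
  have h0 : HasDerivAt (fun t : ℝ => potentialForm edges ℓ1 ℓ2 (q + t • x))
      (fderiv ℝ (potentialForm edges ℓ1 ℓ2) q x) 0 :=
    HasFDerivAt.comp_hasDerivAt (l := potentialForm edges ℓ1 ℓ2)
      (f := fun t : ℝ => q + t • x) 0 hω' hline
  have h1 : HasDerivAt (fun t : ℝ => potentialForm edges ℓ1 ℓ2 (q + t • x) y)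
      (fderiv ℝ (potentialForm edges ℓ1 ℓ2) q x y) 0 := by
    simpa using h0.clm_apply (hasDerivAt_const (0 : ℝ) y)
  refine h1.unique ?_
  simp only [potentialForm_apply, Prod.fst_add, Prod.snd_add, Prod.smul_fst, Prod.smul_snd,
    edgeFlow_add_smul]
  exact HasDerivAt.fun_sum fun e _ =>
    ((hasDerivAt_cost_line (hℓ1 e) _ _ _ _).mul_const _).add
      ((hasDerivAt_cost_line (hℓ2 e) _ _ _ _).mul_const _)

/-! ### Potentials as primitives of the 1-form -/

/-- The derivative of a player's utility in that player's own flow. For player 2 it applies with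
the arguments exchanged, since `U2 edges ℓ2 g h` is definitionally
`U1 edges (fun e u v => ℓ2 e v u) h g`. -/
lemma hasFDerivAt_U1 [Fintype E] [Fintype P] (edges : P → Finset E) {ℓ : E → ℝ → ℝ → ℝ}
    (hℓ : ∀ e v, Continuous (fun u => ℓ e u v)) (g h : P → ℝ) :
    HasFDerivAt (fun g => U1 edges ℓ g h)
      (∑ e : E, ℓ e (edgeFlow edges g e) (edgeFlow edges h e) • flowCLM edges e) g := by
  unfold U1
  refine HasFDerivAt.fun_sum fun e _ => ?_
  simp only [← flowCLM_apply]
  exact ((hℓ e _).integral_hasStrictDerivAt 0 _).hasDerivAt.comp_hasFDerivAt g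
    (flowCLM edges e).hasFDerivAt

/-- Two differentiable functions differ by a constant if and only if they have the same
derivative. -/
lemma sub_eq_sub_iff_hasFDerivAt {X : Type*} [NormedAddCommGroup X] [NormedSpace ℝ X]
    {F G : X → ℝ} {F' G' : X → X →L[ℝ] ℝ} (hF : ∀ x, HasFDerivAt F (F' x) x)
    (hG : ∀ x, HasFDerivAt G (G' x) x) :
    (∀ x y, F x - F y = G x - G y) ↔ ∀ x, F' x = G' x := by
  constructor
  · intro h x
    have hFG : F = fun z => G z + (F x - G x) := by
      funext z
      linarith [h z x]
    have h2 := (hG x).add_const (F x - G x)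
    rw [← hFG] at h2
    exact (hF x).unique h2
  · intro h x y
    have h0 : ∀ z, HasFDerivAt (fun z => F z - G z) (0 : X →L[ℝ] ℝ) z := fun z => by
      simpa [h z] using (hF z).fun_sub (hG z)
    have := is_const_of_fderiv_eq_zero (𝕜 := ℝ) (fun z => (h0 z).differentiableAt)
      (fun z => (h0 z).fderiv) x y
    linarith

/-- A differentiable function is a potential if and only if it is a primitive of
`potentialForm`. -/
lemma isPotential_iff [Fintype E] [Fintype P] (edges : P → Finset E)
    {ℓ1 ℓ2 : E → ℝ → ℝ → ℝ}
    (hℓ1 : ∀ e, ContDiff ℝ 1 (fun q : ℝ × ℝ => ℓ1 e q.1 q.2))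
    (hℓ2 : ∀ e, ContDiff ℝ 1 (fun q : ℝ × ℝ => ℓ2 e q.1 q.2))
    {V : (P → ℝ) → (P → ℝ) → ℝ} {V' : (P → ℝ) × (P → ℝ) → ((P → ℝ) × (P → ℝ)) →L[ℝ] ℝ}
    (hV : ∀ q, HasFDerivAt (fun q : (P → ℝ) × (P → ℝ) => V q.1 q.2) (V' q) q) :
    IsPotential edges ℓ1 ℓ2 V ↔ ∀ q, V' q = potentialForm edges ℓ1 ℓ2 q := by
  have hU1 (h g : P → ℝ) := hasFDerivAt_U1 edges (ℓ := ℓ1)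
    (fun e v => (hℓ1 e).continuous.comp (by fun_prop : Continuous fun u : ℝ => (u, v))) g h
  have hU2 (g h : P → ℝ) := hasFDerivAt_U1 edges (ℓ := fun e u v => ℓ2 e v u)
    (fun e v => (hℓ2 e).continuous.comp (by fun_prop : Continuous fun u : ℝ => (v, u))) h g
  have hV1 (h g : P → ℝ) : HasFDerivAt (fun g => V g h)
      ((V' (g, h)).comp (ContinuousLinearMap.inl ℝ _ _)) g :=
    HasFDerivAt.comp (g := fun q : (P → ℝ) × (P → ℝ) => V q.1 q.2)
      (f := fun g : P → ℝ => (g, h)) g (hV (g, h)) (hasFDerivAt_prodMk_left g h)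
  have hV2 (g h : P → ℝ) : HasFDerivAt (fun h => V g h)
      ((V' (g, h)).comp (ContinuousLinearMap.inr ℝ _ _)) h :=
    HasFDerivAt.comp (g := fun q : (P → ℝ) × (P → ℝ) => V q.1 q.2)
      (f := fun h : P → ℝ => (g, h)) h (hV (g, h)) (hasFDerivAt_prodMk_right g h)
  have i1 (h : P → ℝ) := sub_eq_sub_iff_hasFDerivAt (hV1 h) (hU1 h)
  have i2 (g : P → ℝ) := sub_eq_sub_iff_hasFDerivAt (hV2 g) (hU2 g)
  have key : IsPotential edges ℓ1 ℓ2 V ↔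
      (∀ h g, (V' (g, h)).comp (ContinuousLinearMap.inl ℝ _ _) =
        ∑ e : E, ℓ1 e (edgeFlow edges g e) (edgeFlow edges h e) • flowCLM edges e) ∧
      (∀ g h, (V' (g, h)).comp (ContinuousLinearMap.inr ℝ _ _) =
        ∑ e : E, ℓ2 e (edgeFlow edges g e) (edgeFlow edges h e) • flowCLM edges e) :=
    ⟨fun hp => ⟨fun h => (i1 h).1 fun g g' => hp.1 g g' h, fun g => (i2 g).1 (hp.2 g)⟩,
      fun hp => ⟨fun g g' h => (i1 h).2 (hp.1 h) g g', fun g => (i2 g).2 (hp.2 g)⟩⟩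
  rw [key]
  constructor
  · rintro ⟨h1, h2⟩ ⟨g, h⟩
    refine ContinuousLinearMap.ext fun x => ?_
    have hx : x = ContinuousLinearMap.inl ℝ (P → ℝ) (P → ℝ) x.1 +
        ContinuousLinearMap.inr ℝ (P → ℝ) (P → ℝ) x.2 := by simp
    have a1 := DFunLike.congr_fun (h1 h g) x.1
    have a2 := DFunLike.congr_fun (h2 g h) x.2
    rw [ContinuousLinearMap.comp_apply] at a1 a2
    rw [potentialForm_apply, hx, map_add, a1, a2]
    simp [flowCLM_apply, Finset.sum_add_distrib]
  · intro hV'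
    constructor <;> intro _ _ <;> refine ContinuousLinearMap.ext fun x => ?_ <;>
      simp [hV', potentialForm_apply, flowCLM_apply,
        edgeFlow_zero]

/-! ### Closedness of the 1-form and the symmetry condition -/

/-- The bilinear form `∑_e c_e φ_e(g) φ_e(h)` vanishes if and only if it vanishes on pairs of
standard basis vectors, where it is the sum of `c` over the common edges of two paths. -/
lemma sum_edgeFlow_mul_eq_zero_iff [Fintype E] [Fintype P] (edges : P → Finset E) (c : E → ℝ) :
    (∀ g h : P → ℝ, ∑ e : E, c e * (edgeFlow edges g e * edgeFlow edges h e) = 0) ↔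
      ∀ p1 p2 : P, ∑ e ∈ edges p1 ∩ edges p2, c e = 0 := by
  have hsum (p1 p2 : P) : ∑ e ∈ edges p1 ∩ edges p2, c e =
      ∑ e : E, if e ∈ edges p1 ∧ e ∈ edges p2 then c e else 0 := by
    rw [← Finset.sum_filter]
    congr 1
    ext e
    simp
  constructor
  · intro H p1 p2
    rw [hsum, ← H (Pi.single p1 1) (Pi.single p2 1)]
    refine Finset.sum_congr rfl fun e _ => ?_
    rw [edgeFlow_single, edgeFlow_single]
    split_ifs <;> simp_all
  · intro H g h
    have expand (e : E) : c e * (edgeFlow edges g e * edgeFlow edges h e) =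
        ∑ p1, ∑ p2, g p1 * h p2 * (if e ∈ edges p1 ∧ e ∈ edges p2 then c e else 0) := by
      simp only [edgeFlow, Finset.sum_filter]
      rw [Finset.sum_mul_sum, Finset.mul_sum]
      refine Finset.sum_congr rfl fun p1 _ => ?_
      rw [Finset.mul_sum]
      refine Finset.sum_congr rfl fun p2 _ => ?_
      by_cases h1 : e ∈ edges p1 <;> by_cases h2 : e ∈ edges p2 <;> simp [h1, h2, mul_comm]
    simp only [expand]
    rw [Finset.sum_comm]
    refine Finset.sum_eq_zero fun p1 _ => ?_
    rw [Finset.sum_comm]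
    refine Finset.sum_eq_zero fun p2 _ => ?_
    rw [← Finset.mul_sum, ← hsum, H, mul_zero]

/-- `potentialForm` is closed if and only if the symmetry condition on the costs holds. -/
lemma potentialForm_closed_iff [Fintype E] [Fintype P] (edges : P → Finset E)
    {ℓ1 ℓ2 : E → ℝ → ℝ → ℝ}
    (hℓ1 : ∀ e, ContDiff ℝ 1 (fun q : ℝ × ℝ => ℓ1 e q.1 q.2))
    (hℓ2 : ∀ e, ContDiff ℝ 1 (fun q : ℝ × ℝ => ℓ2 e q.1 q.2))
    (g h : P → ℝ) :
    (∀ x y, fderiv ℝ (potentialForm edges ℓ1 ℓ2) (g, h) x y =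
        fderiv ℝ (potentialForm edges ℓ1 ℓ2) (g, h) y x) ↔
      ∀ p1 p2 : P, ∑ e ∈ edges p1 ∩ edges p2,
        (deriv (fun t => ℓ2 e t (edgeFlow edges h e)) (edgeFlow edges g e) -
         deriv (fun t => ℓ1 e (edgeFlow edges g e) t) (edgeFlow edges h e)) = 0 := by
  rw [← sum_edgeFlow_mul_eq_zero_iff edges fun e =>
    deriv (fun t => ℓ2 e t (edgeFlow edges h e)) (edgeFlow edges g e) -
      deriv (fun t => ℓ1 e (edgeFlow edges g e) t) (edgeFlow edges h e)]
  set c : E → ℝ := fun e => deriv (fun t => ℓ2 e t (edgeFlow edges h e)) (edgeFlow edges g e) -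
      deriv (fun t => ℓ1 e (edgeFlow edges g e) t) (edgeFlow edges h e) with hc
  have hsub (x y : (P → ℝ) × (P → ℝ)) : fderiv ℝ (potentialForm edges ℓ1 ℓ2) (g, h) x y -
      fderiv ℝ (potentialForm edges ℓ1 ℓ2) (g, h) y x =
      (∑ e : E, c e * (edgeFlow edges x.1 e * edgeFlow edges y.2 e)) -
        ∑ e : E, c e * (edgeFlow edges y.1 e * edgeFlow edges x.2 e) := by
    rw [fderiv_potentialForm edges hℓ1 hℓ2, fderiv_potentialForm edges hℓ1 hℓ2,
      ← Finset.sum_sub_distrib, ← Finset.sum_sub_distrib]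
    refine Finset.sum_congr rfl fun e _ => ?_
    simp only [hc]
    ring
  constructor
  · intro H u v
    have := hsub (u, 0) (0, v)
    rw [H, sub_self] at this
    simpa [edgeFlow_zero] using this.symm
  · intro H x y
    have := hsub x y
    rw [H, H, sub_self] at this
    exact sub_eq_zero.1 this

/-! ### Existence of a potential -/

/-- **Theorem 3 (necessary and sufficient condition).** With two types and continuously
differentiable edge cost functions, the abstract game admits a potential function of
class `C²` if and only if `∑_{e∈p₁∩p₂} [∂₁ℓ̃_e^{θ₂}(φ₁,φ₂) − ∂₂ℓ̃_e^{θ₁}(φ₁,φ₂)] = 0`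
for all paths `p₁,p₂` and all flows. -/
theorem potential_exists_iff_sym {E P : Type*} [Fintype E] [Fintype P]
    (edges : P → Finset E) (ℓ1 ℓ2 : E → ℝ → ℝ → ℝ)
    (hℓ1 : ∀ e, ContDiff ℝ 1 (fun q : ℝ × ℝ => ℓ1 e q.1 q.2))
    (hℓ2 : ∀ e, ContDiff ℝ 1 (fun q : ℝ × ℝ => ℓ2 e q.1 q.2)) :
    (∃ V : (P → ℝ) → (P → ℝ) → ℝ,
        ContDiff ℝ 2 (fun q : (P → ℝ) × (P → ℝ) => V q.1 q.2) ∧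
        IsPotential edges ℓ1 ℓ2 V) ↔
    (∀ (p1 p2 : P) (g h : P → ℝ),
      ∑ e ∈ edges p1 ∩ edges p2,
        (deriv (fun t => ℓ2 e t (edgeFlow edges h e)) (edgeFlow edges g e) -
         deriv (fun t => ℓ1 e (edgeFlow edges g e) t) (edgeFlow edges h e)) = 0) := by
  constructor
  · rintro ⟨V, hV, hpot⟩ p1 p2 g h
    have hdV q := (hV.differentiable two_ne_zero q).hasFDerivAt
    have hform := (isPotential_iff edges hℓ1 hℓ2 hdV).1 hpot
    refine (potentialForm_closed_iff edges hℓ1 hℓ2 g h).1 (fun x y => ?_) p1 p2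
    exact second_derivative_symmetric (fun q => by simpa only [hform q] using hdV q)
      ((contDiff_potentialForm edges hℓ1 hℓ2).differentiable one_ne_zero (g, h)).hasFDerivAt x y
  · intro H
    have hω := contDiff_potentialForm edges hℓ1 hℓ2
    obtain ⟨V, hV⟩ := convex_univ.exists_forall_hasFDerivAt_of_fderiv_symmetric isOpen_univ
      (hω.differentiable one_ne_zero).differentiableOn fun q _ =>
        (potentialForm_closed_iff edges hℓ1 hℓ2 q.1 q.2).2 fun p1 p2 => H p1 p2 q.1 q.2
    have hV' q := hV q (Set.mem_univ q)
    exact ⟨fun g h => V (g, h), contDiff_succ_iff_hasFDerivAt (n := 1).2 ⟨_, hω, hV'⟩,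
      (isPotential_iff edges hℓ1 hℓ2 hV').2 fun _ => rfl⟩

end RoutingGame
end
end

section
/- Suppose Θ = {θ_1, θ_2}, Assumption 1 holds, and for all paths p_1, p_2 ∈ P and every flow f ∈ ℝ^{|P|·2}, Σ_{e ∈ p_1 ∩ p_2} [ ∂_1 ℓ̃_e^{θ_2}(φ_e^{θ_1}(f), φ_e^{θ_2}(f)) − ∂_2 ℓ̃_e^{θ_1}(φ_e^{θ_1}(f), φ_e^{θ_2}(f)) ] = 0. If a feasible flow f minimizes the function V(f) = Σ_{e∈E} [ ∫_0^{φ_e^{θ_1}(f)} ℓ̃_e^{θ_1}(u_1, φ_e^{θ_2}(f)) du_1 + ∫_0^{φ_e^{θ_2}(f)} ℓ̃_e^{θ_2}(φ_e^{θ_1}(f), u_2) du_2 − ∫_0^{φ_e^{θ_2}(f)} ∫_0^{φ_e^{θ_1}(f)} ∂_2 ℓ̃_e^{θ_1}(u_1, u_2) du_1 du_2 ] over the set of feasible flows, then f is a Nash equilibrium of the heterogeneous routing game. -/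
/-! The partial derivative of `Vpot` in each player's own flow is that of the player's utility, so
`Vpot` is an exact potential of the two-player game with utilities `U1`, `U2` (`isPotential_Vpot`).
A minimizer of `Vpot` over feasible flows therefore minimizes each `Uᵢ` in its own variable, and a
minimizer of a sum `∑ e, ∫₀^{φ_e} L_e` equalizes path costs: moving a little flow from a used path
`p` to another path `p'` of the same commodity changes the sum at the rate
`∑_{e ∈ p'} L_e - ∑_{e ∈ p} L_e` (`sum_le_sum_of_isMin`).

For player 2 the potential property is Fubini on each edge (`Vpot_eq`). For player 1 the defect is
`∑ e, ∫₀^{φ₂} ∫_{φ₁}^{φ₁'} c_e` with `c_e = ∂₁ℓ₂ - ∂₂ℓ₁`. Rescaling every rectangle to the unit square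
moves the sum inside the integral, where all `c_e` are evaluated at the edge flows of one common
pair of path flows; expanding the factors `φ₁' - φ₁` and `φ₂` over paths then produces the
symmetry sums over `p₁ ∩ p₂`, which vanish (`sum_curl_eq_zero`). -/

open MeasureTheory

noncomputable section

namespace RoutingGame

open scoped Classical

variable {E P : Type*}

variable {K : ℕ}

/-- A pair of path-flow vectors (one per type) is feasible: nonnegative and meeting
the demand of each commodity for each type. -/
def Feasible [Fintype P] (com : P → Fin K) (F1 F2 : Fin K → ℝ) (g h : P → ℝ) : Prop :=
  (∀ p, 0 ≤ g p) ∧ (∀ p, 0 ≤ h p) ∧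
  (∀ k, ∑ p ∈ Finset.univ.filter (fun p => com p = k), g p = F1 k) ∧
  (∀ k, ∑ p ∈ Finset.univ.filter (fun p => com p = k), h p = F2 k)

/-- Cost of a path for a given type: sum of the edge costs along the path, evaluated
at the induced edge flows. -/
def pathCost [Fintype P] (edges : P → Finset E) (ℓ : E → ℝ → ℝ → ℝ)
    (g h : P → ℝ) (p : P) : ℝ :=
  ∑ e ∈ edges p, ℓ e (edgeFlow edges g e) (edgeFlow edges h e)

/-- Nash equilibrium of the two-type heterogeneous routing game: for each type, every
path of a commodity carrying positive flow of that type has cost no larger than any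
other path of the same commodity. -/
def IsNash [Fintype P] (edges : P → Finset E) (com : P → Fin K)
    (ℓ1 ℓ2 : E → ℝ → ℝ → ℝ) (g h : P → ℝ) : Prop :=
  (∀ p p' : P, com p = com p' → 0 < g p →
    pathCost edges ℓ1 g h p ≤ pathCost edges ℓ1 g h p') ∧
  (∀ p p' : P, com p = com p' → 0 < h p →
    pathCost edges ℓ2 g h p ≤ pathCost edges ℓ2 g h p')

/-! ### Edge flows -/

lemma edgeFlow_eq_sum_ite [Fintype P] (edges : P → Finset E) (g : P → ℝ) (e : E) :
    edgeFlow edges g e = ∑ p, if e ∈ edges p then g p else 0 := by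
  rw [edgeFlow, Finset.sum_filter]

lemma edgeFlow_add_mul [Fintype P] (edges : P → Finset E) (g d : P → ℝ) (s : ℝ) (e : E) :
    edgeFlow edges (fun p => g p + s * d p) e = edgeFlow edges g e + s * edgeFlow edges d e := by
  simp only [edgeFlow, Finset.sum_add_distrib, Finset.mul_sum]

lemma edgeFlow_mul [Fintype P] (edges : P → Finset E) (d : P → ℝ) (s : ℝ) (e : E) :
    edgeFlow edges (fun p => s * d p) e = s * edgeFlow edges d e := by
  simp only [edgeFlow, Finset.mul_sum]

lemma edgeFlow_sub [Fintype P] (edges : P → Finset E) (g d : P → ℝ) (e : E) :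
    edgeFlow edges (fun p => g p - d p) e = edgeFlow edges g e - edgeFlow edges d e := by
  simp only [edgeFlow, Finset.sum_sub_distrib]

/-- The bilinear form `(d, h) ↦ ∑ e, φ_e(d) φ_e(h) c_e` vanishes as soon as it vanishes on pairs
of single paths. -/
lemma sum_curl_eq_zero [Fintype E] [Fintype P] (edges : P → Finset E) (c : E → ℝ)
    (hc : ∀ p1 p2 : P, ∑ e ∈ edges p1 ∩ edges p2, c e = 0) (d h : P → ℝ) :
    ∑ e, edgeFlow edges d e * edgeFlow edges h e * c e = 0 := by
  have key : ∀ e, edgeFlow edges d e * edgeFlow edges h e * c e =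
      ∑ p1, ∑ p2, d p1 * h p2 * (if e ∈ edges p1 ∩ edges p2 then c e else 0) := by
    intro e
    rw [edgeFlow_eq_sum_ite, edgeFlow_eq_sum_ite, Finset.sum_mul_sum, Finset.sum_mul]
    refine Finset.sum_congr rfl fun p1 _ => ?_
    rw [Finset.sum_mul]
    refine Finset.sum_congr rfl fun p2 _ => ?_
    by_cases h1 : e ∈ edges p1 <;> by_cases h2 : e ∈ edges p2 <;> simp [h1, h2]
  rw [Finset.sum_congr rfl fun e _ => key e, Finset.sum_comm]
  refine Finset.sum_eq_zero fun p1 _ => ?_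
  rw [Finset.sum_comm]
  refine Finset.sum_eq_zero fun p2 _ => ?_
  rw [← Finset.mul_sum, Finset.sum_ite_mem, Finset.univ_inter, hc, mul_zero]

/-! ### Partial derivatives of the edge costs -/

lemma hasDerivAt_fst {f : ℝ → ℝ → ℝ} (hf : ContDiff ℝ 1 (fun q : ℝ × ℝ => f q.1 q.2)) (x y : ℝ) :
    HasDerivAt (fun t => f t y) (fderiv ℝ (fun q : ℝ × ℝ => f q.1 q.2) (x, y) (1, 0)) x := by
  have h1 := (hf.differentiable one_ne_zero (x, y)).hasFDerivAt
  exact h1.comp_hasDerivAt x ((hasDerivAt_id x).prodMk (hasDerivAt_const x y))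

lemma hasDerivAt_snd {f : ℝ → ℝ → ℝ} (hf : ContDiff ℝ 1 (fun q : ℝ × ℝ => f q.1 q.2)) (x y : ℝ) :
    HasDerivAt (fun t => f x t) (fderiv ℝ (fun q : ℝ × ℝ => f q.1 q.2) (x, y) (0, 1)) y := by
  have h1 := (hf.differentiable one_ne_zero (x, y)).hasFDerivAt
  exact h1.comp_hasDerivAt y ((hasDerivAt_const y x).prodMk (hasDerivAt_id y))

lemma continuous_deriv_fst {f : ℝ → ℝ → ℝ} (hf : ContDiff ℝ 1 (fun q : ℝ × ℝ => f q.1 q.2)) :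
    Continuous (fun q : ℝ × ℝ => deriv (fun t => f t q.2) q.1) := by
  simp only [fun q : ℝ × ℝ => (hasDerivAt_fst hf q.1 q.2).deriv]
  exact (hf.continuous_fderiv one_ne_zero).clm_apply continuous_const

lemma continuous_deriv_snd {f : ℝ → ℝ → ℝ} (hf : ContDiff ℝ 1 (fun q : ℝ × ℝ => f q.1 q.2)) :
    Continuous (fun q : ℝ × ℝ => deriv (fun t => f q.1 t) q.2) := by
  simp only [fun q : ℝ × ℝ => (hasDerivAt_snd hf q.1 q.2).deriv]
  exact (hf.continuous_fderiv one_ne_zero).clm_apply continuous_const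

lemma integral_deriv_fst {f : ℝ → ℝ → ℝ} (hf : ContDiff ℝ 1 (fun q : ℝ × ℝ => f q.1 q.2))
    (a b y : ℝ) : ∫ u in a..b, deriv (fun t => f t y) u = f b y - f a y :=
  intervalIntegral.integral_deriv_eq_sub
    (fun x _ => (hasDerivAt_fst hf x y).differentiableAt)
    (((continuous_deriv_fst hf).comp (by fun_prop : Continuous fun u : ℝ => (u, y))
      ).intervalIntegrable a b)

lemma integral_deriv_snd {f : ℝ → ℝ → ℝ} (hf : ContDiff ℝ 1 (fun q : ℝ × ℝ => f q.1 q.2))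
    (x a b : ℝ) : ∫ u in a..b, deriv (fun t => f x t) u = f x b - f x a :=
  intervalIntegral.integral_deriv_eq_sub
    (fun y _ => (hasDerivAt_snd hf x y).differentiableAt)
    (((continuous_deriv_snd hf).comp (by fun_prop : Continuous fun u : ℝ => (x, u))
      ).intervalIntegrable a b)

lemma continuous_left {f : ℝ → ℝ → ℝ} (hf : ContDiff ℝ 1 (fun q : ℝ × ℝ => f q.1 q.2)) (y : ℝ) :
    Continuous (fun u => f u y) :=
  hf.continuous.comp (by fun_prop : Continuous fun u : ℝ => (u, y))

lemma continuous_right {f : ℝ → ℝ → ℝ} (hf : ContDiff ℝ 1 (fun q : ℝ × ℝ => f q.1 q.2)) (x : ℝ) :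
    Continuous (fun u => f x u) :=
  hf.continuous.comp (by fun_prop : Continuous fun u : ℝ => (x, u))

lemma continuous_integral_fst {c : ℝ → ℝ → ℝ} (hc : Continuous (fun q : ℝ × ℝ => c q.1 q.2))
    (a b : ℝ) : Continuous (fun v => ∫ u in a..b, c u v) :=
  intervalIntegral.continuous_parametric_intervalIntegral_of_continuous' (f := fun v u => c u v)
    (hc.comp continuous_swap) a b

/-! ### The potential property -/

/-- Integrating out `∂₂ℓ₁` removes the dependence of the first integral on the flow of
type `θ₂`. -/
lemma Vpot_eq [Fintype E] [Fintype P] (edges : P → Finset E) (ℓ1 ℓ2 : E → ℝ → ℝ → ℝ)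
    (hℓ1 : ∀ e, ContDiff ℝ 1 (fun q : ℝ × ℝ => ℓ1 e q.1 q.2)) (g h : P → ℝ) :
    Vpot edges ℓ1 ℓ2 g h =
      (∑ e, ∫ u in (0:ℝ)..(edgeFlow edges g e), ℓ1 e u 0) + U2 edges ℓ2 g h := by
  rw [Vpot, U2, ← Finset.sum_add_distrib]
  refine Finset.sum_congr rfl fun e _ => ?_
  have hswap : (∫ u2 in (0:ℝ)..(edgeFlow edges h e),
      ∫ u1 in (0:ℝ)..(edgeFlow edges g e), deriv (fun t => ℓ1 e u1 t) u2) =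
      ∫ u1 in (0:ℝ)..(edgeFlow edges g e), ∫ u2 in (0:ℝ)..(edgeFlow edges h e),
        deriv (fun t => ℓ1 e u1 t) u2 := by
    refine MeasureTheory.intervalIntegral_intervalIntegral_swap ?_
    refine IntegrableOn.mono_set ?_
      (Set.prod_mono Set.uIoc_subset_uIcc Set.uIoc_subset_uIcc)
    exact ((continuous_deriv_snd (hℓ1 e)).comp continuous_swap).continuousOn.integrableOn_compact
      (isCompact_uIcc.prod isCompact_uIcc)
  rw [hswap]
  simp only [integral_deriv_snd (hℓ1 e)]
  rw [intervalIntegral.integral_sub ((continuous_left (hℓ1 e) _).intervalIntegrable _ _)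
    ((continuous_left (hℓ1 e) _).intervalIntegrable _ _)]
  ring

/-- A double integral over a rectangle with one side on the axis `u2 = 0`, rescaled to the unit square. -/
lemma integral_rectangle_rescale (c : ℝ → ℝ → ℝ) (x x' y : ℝ) :
    ∫ u2 in (0:ℝ)..y, ∫ u1 in x..x', c u1 u2 =
      ∫ s in (0:ℝ)..1, ∫ t in (0:ℝ)..1, (x' - x) * y * c (x + t * (x' - x)) (s * y) := by
  have h1 : ∀ u2, ∫ u1 in x..x', c u1 u2 =
      ∫ t in (0:ℝ)..1, (x' - x) * c (x + t * (x' - x)) u2 := by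
    intro u2
    have := intervalIntegral.smul_integral_comp_add_mul (a := 0) (b := 1)
      (fun u => c u u2) (x' - x) x
    simp only [mul_zero, add_zero, mul_one, add_sub_cancel, smul_eq_mul] at this
    rw [← this, intervalIntegral.integral_const_mul]
    simp only [mul_comm]
  have h2 := intervalIntegral.smul_integral_comp_mul_left (a := 0) (b := 1)
      (fun v => ∫ u1 in x..x', c u1 v) y
  simp only [mul_zero, mul_one, smul_eq_mul] at h2
  rw [← h2, ← intervalIntegral.integral_const_mul]
  refine intervalIntegral.integral_congr fun s _ => ?_
  simp only [h1]
  rw [← intervalIntegral.integral_const_mul]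
  refine intervalIntegral.integral_congr fun t _ => ?_
  simp only [mul_comm y s]
  ring

/-- Under the path-wise symmetry condition, `Vpot` is an exact potential; the condition is not
needed edge by edge. -/
theorem isPotential_Vpot [Fintype E] [Fintype P] (edges : P → Finset E) (ℓ1 ℓ2 : E → ℝ → ℝ → ℝ)
    (hℓ1 : ∀ e, ContDiff ℝ 1 (fun q : ℝ × ℝ => ℓ1 e q.1 q.2))
    (hℓ2 : ∀ e, ContDiff ℝ 1 (fun q : ℝ × ℝ => ℓ2 e q.1 q.2))
    (hsym : ∀ (p1 p2 : P) (g h : P → ℝ),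
      ∑ e ∈ edges p1 ∩ edges p2,
        (deriv (fun t => ℓ2 e t (edgeFlow edges h e)) (edgeFlow edges g e) -
         deriv (fun t => ℓ1 e (edgeFlow edges g e) t) (edgeFlow edges h e)) = 0) :
    IsPotential edges ℓ1 ℓ2 (Vpot edges ℓ1 ℓ2) := by
  refine ⟨fun g' g h => ?_, fun g h h' => ?_⟩
  · let c : E → ℝ → ℝ → ℝ := fun e x y =>
      deriv (fun t => ℓ2 e t y) x - deriv (fun t => ℓ1 e x t) y
    have hc : ∀ e, Continuous (fun q : ℝ × ℝ => c e q.1 q.2) := fun e =>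
      (continuous_deriv_fst (hℓ2 e)).sub (continuous_deriv_snd (hℓ1 e))
    -- On each edge the defect of the potential identity is an integral of `c`.
    have hedge : ∀ e (x x' y : ℝ),
        (∫ u in (0:ℝ)..y, ℓ2 e x' u) - (∫ u in (0:ℝ)..y, ℓ2 e x u) -
          ((∫ u2 in (0:ℝ)..y, ∫ u1 in (0:ℝ)..x', deriv (fun t => ℓ1 e u1 t) u2) -
            ∫ u2 in (0:ℝ)..y, ∫ u1 in (0:ℝ)..x, deriv (fun t => ℓ1 e u1 t) u2) =
        ∫ u2 in (0:ℝ)..y, ∫ u1 in x..x', c e u1 u2 := by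
      intro e x x' y
      have hD := continuous_deriv_snd (hℓ1 e)
      have hI : ∀ u2 a b, IntervalIntegrable (fun u1 => deriv (fun t => ℓ1 e u1 t) u2)
          volume a b := fun u2 a b =>
        (hD.comp (by fun_prop : Continuous fun u : ℝ => (u, u2))).intervalIntegrable a b
      have hJ : ∀ u2 a b, IntervalIntegrable (fun u1 => deriv (fun t => ℓ2 e t u2) u1)
          volume a b := fun u2 a b =>
        ((continuous_deriv_fst (hℓ2 e)).comp
          (by fun_prop : Continuous fun u : ℝ => (u, u2))).intervalIntegrable a b
      have hK : ∀ a b, Continuous fun u2 => ∫ u1 in a..b, deriv (fun t => ℓ1 e u1 t) u2 :=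
        fun a b => continuous_integral_fst (c := fun u v => deriv (fun t => ℓ1 e u t) v) hD a b
      rw [← intervalIntegral.integral_sub ((continuous_right (hℓ2 e) _).intervalIntegrable _ _)
          ((continuous_right (hℓ2 e) _).intervalIntegrable _ _),
        ← intervalIntegral.integral_sub ((hK _ _).intervalIntegrable _ _)
          ((hK _ _).intervalIntegrable _ _),
        ← intervalIntegral.integral_sub
          (Continuous.intervalIntegrable
            ((continuous_right (hℓ2 e) x').fun_sub (continuous_right (hℓ2 e) x)) _ _)
          (Continuous.intervalIntegrable ((hK 0 x').fun_sub (hK 0 x)) _ _)]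
      refine intervalIntegral.integral_congr fun u2 _ => ?_
      simp only [c]
      rw [intervalIntegral.integral_sub (hJ _ _ _) (hI _ _ _), integral_deriv_fst (hℓ2 e),
        intervalIntegral.integral_interval_sub_left (hI _ _ _) (hI _ _ _)]
    have hdefect : ∑ e, ∫ u2 in (0:ℝ)..(edgeFlow edges h e),
        ∫ u1 in (edgeFlow edges g e)..(edgeFlow edges g' e), c e u1 u2 = 0 := by
      rw [Finset.sum_congr rfl fun e _ => integral_rectangle_rescale (c e) _ _ _]
      have hcont : ∀ e (a x d y : ℝ), Continuous
          (fun q : ℝ × ℝ => a * c e (x + q.1 * d) (q.2 * y)) := fun e a x d y =>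
        continuous_const.mul ((hc e).comp
          (by fun_prop : Continuous fun q : ℝ × ℝ => (x + q.1 * d, q.2 * y)))
      rw [← intervalIntegral.integral_finsetSum fun e _ =>
        (continuous_integral_fst (hcont e _ _ _ _) 0 1).intervalIntegrable 0 1]
      refine (intervalIntegral.integral_congr fun s _ => ?_).trans intervalIntegral.integral_zero
      have hcont' : ∀ e (a x d y : ℝ), Continuous
          (fun t : ℝ => a * c e (x + t * d) (s * y)) := fun e a x d y =>
        (hcont e a x d y).comp (by fun_prop : Continuous fun t : ℝ => (t, s))
      rw [← intervalIntegral.integral_finsetSum fun e _ =>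
        (hcont' e _ _ _ _).intervalIntegrable 0 1]
      refine (intervalIntegral.integral_congr fun t _ => ?_).trans intervalIntegral.integral_zero
      -- For fixed `s` and `t` all edges see the same pair of path flows, so the symmetry condition applies.
      have := sum_curl_eq_zero edges
        (fun e => c e (edgeFlow edges (fun p => g p + t * (g' p - g p)) e)
          (edgeFlow edges (fun p => s * h p) e))
        (fun p1 p2 => hsym p1 p2 _ _) (fun p => g' p - g p) h
      simpa only [edgeFlow_add_mul edges g (fun p => g' p - g p), edgeFlow_mul,
        edgeFlow_sub] using this
    rw [← sub_eq_zero, ← hdefect]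
    simp only [Vpot, U1, ← Finset.sum_sub_distrib, ← hedge]
    refine Finset.sum_congr rfl fun e _ => ?_
    ring
  · rw [Vpot_eq edges ℓ1 ℓ2 hℓ1, Vpot_eq edges ℓ1 ℓ2 hℓ1]
    ring

/-! ### First-order optimality -/

/-- Beckmann's argument for one type: a flow minimizing `∑ e, ∫₀^{φ_e} L_e` under fixed demands
uses only paths that are cheapest for the edge costs `L_e(φ_e)`. -/
theorem sum_le_sum_of_isMin [Fintype E] [Fintype P] (edges : P → Finset E) (com : P → Fin K)
    (F : Fin K → ℝ) (L : E → ℝ → ℝ) (hL : ∀ e, Continuous (L e)) (g : P → ℝ)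
    (hg : ∀ p, 0 ≤ g p) (hgF : ∀ k, ∑ p ∈ Finset.univ.filter (fun p => com p = k), g p = F k)
    (hmin : ∀ g' : P → ℝ, (∀ p, 0 ≤ g' p) →
      (∀ k, ∑ p ∈ Finset.univ.filter (fun p => com p = k), g' p = F k) →
      ∑ e, ∫ u in (0:ℝ)..(edgeFlow edges g e), L e u ≤
        ∑ e, ∫ u in (0:ℝ)..(edgeFlow edges g' e), L e u)
    (p p' : P) (hpp : com p = com p') (hp : 0 < g p) :
    ∑ e ∈ edges p, L e (edgeFlow edges g e) ≤ ∑ e ∈ edges p', L e (edgeFlow edges g e) := by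
  -- The direction that moves one unit of flow from `p` to `p'`; it preserves all demands.
  let d : P → ℝ := fun q => (if q = p' then 1 else 0) - (if q = p then 1 else 0)
  have hd : ∀ e, edgeFlow edges d e =
      (if e ∈ edges p' then 1 else 0) - (if e ∈ edges p then 1 else 0) := by
    intro e
    simp [edgeFlow, d, Finset.sum_sub_distrib, Finset.sum_ite_eq']
  let f : ℝ → ℝ := fun s => ∑ e, ∫ u in (0:ℝ)..(edgeFlow edges g e + s * edgeFlow edges d e), L e u
  have hder : HasDerivAt f (∑ e, L e (edgeFlow edges g e) * edgeFlow edges d e) 0 := by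
    refine HasDerivAt.fun_sum fun e _ => ?_
    have h1 : HasDerivAt (fun s : ℝ => edgeFlow edges g e + s * edgeFlow edges d e)
        (edgeFlow edges d e) 0 := by
      simpa using ((hasDerivAt_id (0:ℝ)).mul_const (edgeFlow edges d e)).const_add
        (edgeFlow edges g e)
    have h2 := intervalIntegral.integral_hasDerivAt_right
      ((hL e).intervalIntegrable 0 (edgeFlow edges g e))
      ((hL e).stronglyMeasurableAtFilter _ _) (hL e).continuousAt
    have h3 : HasDerivAt (fun x => ∫ u in (0:ℝ)..x, L e u) (L e (edgeFlow edges g e))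
        (edgeFlow edges g e + 0 * edgeFlow edges d e) := by simpa using h2
    exact h3.comp (0:ℝ) h1
  have hfmin : ∀ s, 0 ≤ s → s ≤ g p → f 0 ≤ f s := by
    intro s hs hsp
    have := hmin (fun q => g q + s * d q) (fun q => ?_) (fun k => ?_)
    · simpa [f, edgeFlow_add_mul] using this
    · have hq := hg q
      by_cases h1 : q = p
      · rw [← h1] at hsp
        by_cases h2 : q = p' <;> simp only [d, h1, if_true] <;> split_ifs <;> grind
      · by_cases h2 : q = p' <;> simp only [d, h1, if_false] <;> split_ifs <;> grind
    · rw [Finset.sum_add_distrib, hgF, ← Finset.mul_sum]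
      simp [d, Finset.sum_sub_distrib, Finset.sum_ite_eq', hpp]
  have hnonneg : 0 ≤ ∑ e, L e (edgeFlow edges g e) * edgeFlow edges d e := by
    have ht := (hasDerivWithinAt_iff_tendsto_slope' (s := Set.Ioi (0:ℝ)) (by simp)).1
      hder.hasDerivWithinAt
    refine ge_of_tendsto ht ?_
    filter_upwards [Ioc_mem_nhdsGT hp] with s hs
    rw [slope_def_field, sub_zero]
    exact div_nonneg (sub_nonneg.2 (hfmin s hs.1.le hs.2)) hs.1.le
  simp only [hd, mul_sub, mul_ite, mul_one, mul_zero, Finset.sum_sub_distrib, Finset.sum_ite_mem,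
    Finset.univ_inter] at hnonneg
  linarith

/-- **Corollary 1.** With two types, under Assumption 1 and the symmetry condition
`∑_{e∈p₁∩p₂} [∂₁ℓ̃_e^{θ₂}(φ₁,φ₂) − ∂₂ℓ̃_e^{θ₁}(φ₁,φ₂)] = 0` for all paths and flows,
any feasible flow minimizing the potential `Vpot` over the set of feasible flows is a
Nash equilibrium of the heterogeneous routing game. -/
theorem min_vpot_isNash {E P : Type*} [Fintype E] [Fintype P] {K : ℕ}
    (edges : P → Finset E) (com : P → Fin K) (F1 F2 : Fin K → ℝ)
    (hF1 : ∀ k, 0 ≤ F1 k) (hF2 : ∀ k, 0 ≤ F2 k)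
    (hPk : ∀ k, ∃ p, com p = k)
    (ℓ1 ℓ2 : E → ℝ → ℝ → ℝ)
    (hℓ1 : ∀ e, ContDiff ℝ 1 (fun q : ℝ × ℝ => ℓ1 e q.1 q.2))
    (hℓ2 : ∀ e, ContDiff ℝ 1 (fun q : ℝ × ℝ => ℓ2 e q.1 q.2))
    (hpos1 : ∀ e x y, 0 ≤ x → 0 ≤ y → 0 ≤ ℓ1 e x y)
    (hpos2 : ∀ e x y, 0 ≤ x → 0 ≤ y → 0 ≤ ℓ2 e x y)
    (hmono1 : ∀ e y, 0 ≤ y → ∀ s t, 0 ≤ s → s ≤ t → ℓ1 e s y ≤ ℓ1 e t y)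
    (hmono2 : ∀ e x, 0 ≤ x → ∀ s t, 0 ≤ s → s ≤ t → ℓ2 e x s ≤ ℓ2 e x t)
    (hsym : ∀ (p1 p2 : P) (g h : P → ℝ),
      ∑ e ∈ edges p1 ∩ edges p2,
        (deriv (fun t => ℓ2 e t (edgeFlow edges h e)) (edgeFlow edges g e) -
         deriv (fun t => ℓ1 e (edgeFlow edges g e) t) (edgeFlow edges h e)) = 0)
    (g h : P → ℝ) (hfeas : Feasible com F1 F2 g h)
    (hmin : ∀ g' h' : P → ℝ, Feasible com F1 F2 g' h' →
      Vpot edges ℓ1 ℓ2 g h ≤ Vpot edges ℓ1 ℓ2 g' h') :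
    IsNash edges com ℓ1 ℓ2 g h := by
  obtain ⟨hpot1, hpot2⟩ := isPotential_Vpot edges ℓ1 ℓ2 hℓ1 hℓ2 hsym
  obtain ⟨hg, hh, hgF, hhF⟩ := hfeas
  refine ⟨fun p p' hpp hp => ?_, fun p p' hpp hp => ?_⟩
  · refine sum_le_sum_of_isMin edges com F1 (fun e u => ℓ1 e u (edgeFlow edges h e))
      (fun e => continuous_left (hℓ1 e) _) g hg hgF (fun g' hg' hgF' => ?_) p p' hpp hp
    have h1 := hmin g' h ⟨hg', hh, hgF', hhF⟩
    have h2 := hpot1 g g' h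
    simp only [U1] at h2
    linarith
  · refine sum_le_sum_of_isMin edges com F2 (fun e u => ℓ2 e (edgeFlow edges g e) u)
      (fun e => continuous_right (hℓ2 e) _) h hh hhF (fun h' hh' hhF' => ?_) p p' hpp hp
    have h1 := hmin g h' ⟨hg, hh', hgF, hhF'⟩
    have h2 := hpot2 g h h'
    simp only [U2] at h2
    linarith

end RoutingGame
end
end
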